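/- arXiv:2202.00304 — 2 statements merged into one kernel-verified Lean document; each statement's English description precedes it below -/
import Mathlib

section
/- Let N be a finite length graded S-module, S = k[X_0,...,X_n], and let P_k(N) be the sheafification of the k-th syzygy module of N from a minimal free resolution. Then H^k_*(P_k(N)) = N and H^i_*(P_k(N)) = 0 for all i with 1 ≤ i ≤ n-1, i ≠ k. -/
/-!
Background setup (the paper works on projective space `ℙⁿ` over a field `K`):
we encode a coherent sheaf on `ℙⁿ_K` by a module `M` over the homogeneous coordinate
ring `S = K[X₀,…,Xₙ]` (namely `M = Γ_*` of the sheaf), and the intermediate cohomology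
module `H^i_*(F) = ⊕_ν H^i(ℙⁿ, F(ν))` (for `i ≥ 1`) by the local cohomology module
`H^{i+1}_𝔪(M)` at the irrelevant maximal ideal `𝔪 = (X₀,…,Xₙ)`, to which it is
canonically isomorphic.
-/

open CategoryTheory TensorProduct

noncomputable section

/-- The homogeneous coordinate ring `S = K[X₀,…,Xₙ]` of `ℙⁿ`. -/
abbrev PolyS (K : Type) [Field K] (n : ℕ) : Type := MvPolynomial (Fin (n+1)) K

variable (K : Type) [Field K] (n : ℕ)

/-- The irrelevant maximal ideal `𝔪 = (X₀,…,Xₙ)` of `S`. -/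
def irrel : Ideal (PolyS K n) := Ideal.span (Set.range MvPolynomial.X)

/-- `H^i_*` of the sheaf on `ℙⁿ` associated to the `S`-module `M`, encoded (for `i ≥ 1`)
as the local cohomology module `H^{i+1}_𝔪(M)`. -/
def Hstar (i : ℕ) (M : Type) [AddCommGroup M] [Module (PolyS K n) M] :
    ModuleCat (PolyS K n) :=
  (localCohomology (irrel K n) (i+1)).obj (ModuleCat.of (PolyS K n) M)

/-- `M` is (the module of sections `Γ_*` of) an algebraic vector bundle on `ℙⁿ`:
finitely generated, depth `≥ 2` at `𝔪` (i.e. `H⁰_𝔪(M) = H¹_𝔪(M) = 0`, so `M = Γ_*(M̃)`),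
and locally free at every prime other than the irrelevant ideal. -/
structure IsBundleModule (M : Type) [AddCommGroup M] [Module (PolyS K n) M] : Prop where
  finite : Module.Finite (PolyS K n) M
  h0 : Subsingleton ((localCohomology (irrel K n) 0).obj (ModuleCat.of (PolyS K n) M))
  h1 : Subsingleton ((localCohomology (irrel K n) 1).obj (ModuleCat.of (PolyS K n) M))
  locFree : ∀ p : PrimeSpectrum (PolyS K n), p.asIdeal ≠ irrel K n →
    Module.Free (Localization.AtPrime p.asIdeal) (LocalizedModule p.asIdeal.primeCompl M)

/-- `M` represents a vector bundle of rank two on `ℙⁿ`. -/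
structure IsRankTwoBundleModule (M : Type) [AddCommGroup M] [Module (PolyS K n) M]
    extends IsBundleModule K n M : Prop where
  rank2 : ∀ p : PrimeSpectrum (PolyS K n), p.asIdeal ≠ irrel K n →
    Module.rank (Localization.AtPrime p.asIdeal) (LocalizedModule p.asIdeal.primeCompl M) = 2

/-- A finite length module which is moreover supported at the irrelevant ideal: the
(ungraded avatar of the) notion of a *graded* `S`-module of finite length. -/
def IsGradedFiniteLength (N : Type) [AddCommGroup N] [Module (PolyS K n) N] : Prop :=
  IsFiniteLength (PolyS K n) N ∧
    ∃ c : ℕ, (irrel K n) ^ c ≤ Module.annihilator (PolyS K n) N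

/-- A minimal graded free resolution `⋯ → L₁ → L₀ → N → 0` of an `S`-module `N`
(minimality: all differentials have entries in the maximal ideal `𝔪`).
Here `d i : L (i+1) → L i` and `P_k(N)`, the `k`-th syzygy module, is `range (d k)`,
i.e. the image of `f_{k+1} : L_{k+1} → L_k`. -/
structure MinimalResolution (N : Type) [AddCommGroup N] [Module (PolyS K n) N] where
  L : ℕ → Type
  [addCommGroup : ∀ i, AddCommGroup (L i)]
  [module : ∀ i, Module (PolyS K n) (L i)]
  free : ∀ i, Module.Free (PolyS K n) (L i)
  finite : ∀ i, Module.Finite (PolyS K n) (L i)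
  d : ∀ i : ℕ, L (i+1) →ₗ[PolyS K n] L i
  aug : L 0 →ₗ[PolyS K n] N
  aug_surjective : Function.Surjective aug
  exact0 : LinearMap.range (d 0) = LinearMap.ker aug
  exact : ∀ i : ℕ, LinearMap.range (d (i+1)) = LinearMap.ker (d i)
  minimal : ∀ i : ℕ, LinearMap.range (d i) ≤ (irrel K n) • (⊤ : Submodule (PolyS K n) (L i))
  minimal0 : LinearMap.ker aug ≤ (irrel K n) • (⊤ : Submodule (PolyS K n) (L 0))

attribute [instance] MinimalResolution.addCommGroup MinimalResolution.module

namespace SyzAux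
open Limits Opposite

variable {R : Type} [CommRing R]

def yMap {P P' : ChainComplex (ModuleCat.{0} R) ℕ} (φ : P' ⟶ P) (Y : ModuleCat.{0} R) :
    P.linearYonedaObj R Y ⟶ P'.linearYonedaObj R Y :=
  (HomologicalComplex.unopFunctor _ _).map
    ((((linearYoneda R (ModuleCat.{0} R)).obj Y).rightOp.mapHomologicalComplex _).map φ).op

lemma yMap_f {P P' : ChainComplex (ModuleCat.{0} R) ℕ} (φ : P' ⟶ P) (Y : ModuleCat.{0} R)
   (n : ℕ) (f : P.X n ⟶ Y) : (yMap φ Y).f n f = (φ.f n ≫ f : P'.X n ⟶ Y) := rfl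

lemma abs_nat {C : Type*} [Category* C] {E E' H H' K K' : C} (m : E ⟶ E') (i' : E' ⟶ H') (u' : K' ≅ H')
   (i : E ⟶ H) (u : K ≅ H) (h : H ⟶ H') (k : K ⟶ K') (h1 : m ≫ i' = i ≫ h)
   (h2 : u.hom ≫ h = k ≫ u'.hom) : m ≫ (i' ≫ u'.inv) = (i ≫ u.inv) ≫ k := by
  rw [← Category.assoc, h1, Category.assoc, Category.assoc, ← cancel_mono u'.hom]
  simp [← h2]

lemma isoExt_naturality {X X' : ModuleCat.{0} R} (P : ProjectiveResolution X)
    (P' : ProjectiveResolution X') (g : X' ⟶ X) (φ : ProjectiveResolution.Hom P' P g) (n : ℕ)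
    (Y : ModuleCat.{0} R) :
    ((Ext R (ModuleCat.{0} R) n).map g.op).app Y ≫ (P'.isoExt n Y).hom =
      (P.isoExt n Y).hom ≫ HomologicalComplex.homologyMap (yMap φ.hom Y) n := by
  have h1 := P'.isoLeftDerivedObj_inv_naturality g P φ.hom
    (by simpa using φ.hom_f_zero_comp_π_f_zero)
    ((linearYoneda R (ModuleCat.{0} R)).obj Y).rightOp n
  have h2 := ShortComplex.homologyOpIso_hom_naturality
    ((HomologicalComplex.shortComplexFunctor _ _ n).map (yMap φ.hom Y))
  have h1' := congrArg Quiver.Hom.unop h1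
  have h2' := congrArg Quiver.Hom.unop h2
  simp only [unop_comp] at h1' h2'
  exact abs_nat _ _ (HomologicalComplex.homologyUnop ((((linearYoneda R (ModuleCat.{0} R)).obj Y).rightOp.mapHomologicalComplex _).obj P'.complex) n) _ (HomologicalComplex.homologyUnop ((((linearYoneda R (ModuleCat.{0} R)).obj Y).rightOp.mapHomologicalComplex _).obj P.complex) n) _ _ h1' h2'

def cocyc {X : ModuleCat.{0} R} (P : ProjectiveResolution X) (n : ℕ) (Y : ModuleCat.{0} R) :
   Submodule R (P.complex.X n ⟶ Y) where
  carrier := {f | P.complex.d (n+1) n ≫ f = 0}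
  add_mem' ha hb := by simp only [Set.mem_ofPred_eq, Preadditive.comp_add] at *; simp [ha, hb]
  zero_mem' := by simp
  smul_mem' r f hf := by simp only [Set.mem_ofPred_eq, Linear.comp_smul] at *; simp [hf]

lemma cocyc_prop {X : ModuleCat.{0} R} {P : ProjectiveResolution X} {n : ℕ} {Y : ModuleCat.{0} R}
   (f : cocyc P n Y) : P.complex.d (n+1) n ≫ f.1 = 0 := f.2

def extMkL {X : ModuleCat.{0} R} (P : ProjectiveResolution X) (n : ℕ) (Y : ModuleCat.{0} R) :
   cocyc P n Y →ₗ[R] Abelian.Ext X Y n where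
  toFun f := P.extMk f.1 (n+1) rfl (cocyc_prop f)
  map_add' a b := by rw [P.add_extMk]; rfl
  map_smul' r a := by
    simp only [RingHom.id_apply]
    rw [Abelian.Ext.smul_eq_comp_mk₀, P.extMk_comp_mk₀]
    simp

def cycL {X : ModuleCat.{0} R} (P : ProjectiveResolution X) (n : ℕ) (Y : ModuleCat.{0} R) :
   (P.complex.linearYonedaObj R Y).cycles n →ₗ[R] cocyc P n Y :=
  LinearMap.codRestrict _ ((P.complex.linearYonedaObj R Y).iCycles n).hom (fun z => by
        have := congr($((P.complex.linearYonedaObj R Y).iCycles_d n (n+1)) z)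
        exact this)

def extB {X : ModuleCat.{0} R} (P : ProjectiveResolution X) (n : ℕ) (Y : ModuleCat.{0} R) :
   (P.complex.linearYonedaObj R Y).cycles n ⟶ ModuleCat.of R (Abelian.Ext X Y n) :=
  ModuleCat.ofHom ((extMkL P n Y).comp (cycL P n Y))

lemma toCycles_extB {X : ModuleCat.{0} R} (P : ProjectiveResolution X) (n : ℕ) (Y : ModuleCat.{0} R) :
   (P.complex.linearYonedaObj R Y).toCycles n (n+1) ≫ extB P (n+1) Y = 0 := by
  ext (z : P.complex.X n ⟶ Y)
  refine (P.extMk_eq_zero_iff _ (n+2) rfl (cocyc_prop (cycL P (n+1) Y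
    ((P.complex.linearYonedaObj R Y).toCycles n (n+1) z))) n rfl).2 ⟨z, ?_⟩
  have := congr($((P.complex.linearYonedaObj R Y).toCycles_i n (n+1)) z)
  exact this.symm

def extC {X : ModuleCat.{0} R} (P : ProjectiveResolution X) (n : ℕ) (Y : ModuleCat.{0} R) :
   (P.complex.linearYonedaObj R Y).homology (n+1) ⟶ ModuleCat.of R (Abelian.Ext X Y (n+1)) :=
  ((P.complex.linearYonedaObj R Y).homologyIsCokernel n (n+1) (by simp)).desc
    (CokernelCofork.ofπ _ (toCycles_extB P n Y))

lemma π_extC {X : ModuleCat.{0} R} (P : ProjectiveResolution X) (n : ℕ) (Y : ModuleCat.{0} R) :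
   (P.complex.linearYonedaObj R Y).homologyπ (n+1) ≫ extC P n Y = extB P (n+1) Y :=
  ((P.complex.linearYonedaObj R Y).homologyIsCokernel n (n+1) (by simp)).fac _ WalkingParallelPair.one

lemma π_extC_assoc {X : ModuleCat.{0} R} (P : ProjectiveResolution X) (n : ℕ) (Y : ModuleCat.{0} R)
   {Z : ModuleCat.{0} R} (h : ModuleCat.of R (Abelian.Ext X Y (n+1)) ⟶ Z) :
   (P.complex.linearYonedaObj R Y).homologyπ (n+1) ≫ extC P n Y ≫ h = extB P (n+1) Y ≫ h := by
  rw [← π_extC, Category.assoc]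

lemma extC_bij {X : ModuleCat.{0} R} (P : ProjectiveResolution X) (n : ℕ) (Y : ModuleCat.{0} R) :
    Function.Bijective (extC P n Y) := by
  have hπ : Function.Surjective ((P.complex.linearYonedaObj R Y).homologyπ (n+1)) :=
    (ModuleCat.epi_iff_surjective _).1 inferInstance
  constructor
  · rw [injective_iff_map_eq_zero]
    intro a ha
    obtain ⟨z, rfl⟩ := hπ a
    have h1 : extB P (n+1) Y z = 0 := by
      rw [← π_extC]; exact ha
    obtain ⟨w, hw⟩ := (P.extMk_eq_zero_iff _ (n+2) rfl (cocyc_prop (cycL P (n+1) Y z)) n rfl).1 h1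
    have hz : z = (P.complex.linearYonedaObj R Y).toCycles n (n+1) w := by
      apply (ModuleCat.mono_iff_injective ((P.complex.linearYonedaObj R Y).iCycles (n+1))).1 inferInstance
      have := congr($((P.complex.linearYonedaObj R Y).toCycles_i n (n+1)) w)
      exact hw.symm.trans this.symm
    rw [hz]
    exact congr($((P.complex.linearYonedaObj R Y).toCycles_comp_homologyπ n (n+1)) w)
  · intro e
    obtain ⟨f, hf, rfl⟩ := P.extMk_surjective e (n+2) rfl
    have hk : (ModuleCat.ofHom (LinearMap.toSpanSingleton R (P.complex.X (n+1) ⟶ Y) f) :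
        ModuleCat.of R R ⟶ (P.complex.linearYonedaObj R Y).X (n+1)) ≫
          (P.complex.linearYonedaObj R Y).d (n+1) (n+2) = 0 := by
      ext
      change P.complex.d (n+2) (n+1) ≫ ((1 : R) • f) = 0
      rw [one_smul, hf]
    let z := (P.complex.linearYonedaObj R Y).liftCycles _ (n+2) (by simp) hk (1 : R)
    have hz : (cycL P (n+1) Y z).1 = f := by
      have := congr($((P.complex.linearYonedaObj R Y).liftCycles_i _ (n+2) (by simp) hk) (1 : R))
      refine Eq.trans this ?_
      change (1 : R) • f = f
      rw [one_smul]
    refine ⟨(P.complex.linearYonedaObj R Y).homologyπ (n+1) z, ?_⟩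
    have h1 : extC P n Y ((P.complex.linearYonedaObj R Y).homologyπ (n+1) z) =
      extB P (n+1) Y z := by rw [← π_extC]; rfl
    rw [h1]
    change P.extMk (cycL P (n+1) Y z).1 (n+2) rfl (cocyc_prop _) = _
    congr 1

lemma extC_naturality {X X' : ModuleCat.{0} R} (P : ProjectiveResolution X)
    (P' : ProjectiveResolution X') (g : X' ⟶ X) (φ : ProjectiveResolution.Hom P' P g) (n : ℕ)
    (Y : ModuleCat.{0} R) :
    HomologicalComplex.homologyMap (yMap φ.hom Y) (n+1) ≫ extC P' n Y =
     extC P n Y ≫ ModuleCat.ofHom ((Abelian.Ext.bilinearCompOfLinear R X' X Y 0 (n+1) (n+1)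
       (zero_add _)) (Abelian.Ext.mk₀ g)) := by
  rw [← cancel_epi ((P.complex.linearYonedaObj R Y).homologyπ (n+1)), π_extC_assoc,
   HomologicalComplex.homologyπ_naturality_assoc, π_extC]
  ext z
  refine Eq.trans ?_
    (ProjectiveResolution.mk₀_comp_extMk _ (n+2) rfl (cocyc_prop (cycL P (n+1) Y z)) φ).symm
  change P'.extMk (cycL P' (n+1) Y _).1 (n+2) rfl (cocyc_prop _) = _
  congr 1
  exact congr($(HomologicalComplex.cyclesMap_i (yMap φ.hom Y) (n+1)) z)

/-- the derived category `Ext` as a functor in the first variable -/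
def nExt (n : ℕ) (Y : ModuleCat.{0} R) : (ModuleCat.{0} R)ᵒᵖ ⥤ ModuleCat.{0} R where
  obj X := ModuleCat.of R (Abelian.Ext X.unop Y n)
  map g := ModuleCat.ofHom ((Abelian.Ext.bilinearCompOfLinear R _ _ Y 0 n n
       (zero_add _)) (Abelian.Ext.mk₀ g.unop))
  map_id X := by
    ext x
    exact Abelian.Ext.mk₀_id_comp x
  map_comp f g := by
    ext x
    exact (Abelian.Ext.mk₀_comp_mk₀_assoc g.unop f.unop x).symm

def bridge (n : ℕ) (Y : ModuleCat.{0} R) :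
    (Ext R (ModuleCat.{0} R) (n+1)).flip.obj Y ≅ nExt (n+1) Y :=
  NatIso.ofComponents
    (fun X => (projectiveResolution X.unop).isoExt (n+1) Y ≪≫
      @asIso _ _ _ _ (extC (projectiveResolution X.unop) n Y)
        ((ConcreteCategory.isIso_iff_bijective _).2 (extC_bij _ _ _)))
    (fun {X X'} g => by
      let φ : ProjectiveResolution.Hom (projectiveResolution X'.unop) (projectiveResolution X.unop) g.unop :=
        ⟨ProjectiveResolution.lift g.unop _ _, ProjectiveResolution.lift_commutes_zero _ _ _⟩
      have h1 := isoExt_naturality _ _ g.unop φ (n+1) Y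
      have h2 := extC_naturality _ _ g.unop φ n Y
      simp only [Iso.trans_hom]
      refine (Category.assoc _ _ _).symm.trans ?_
      refine (congrArg (· ≫ extC _ n Y) h1).trans ?_
      exact (Category.assoc _ _ _).trans (congrArg (_ ≫ ·) h2))

def sysQ (J : Ideal R) : ℕᵒᵖᵒᵖ ⥤ (ModuleCat.{0} R)ᵒᵖ :=
  (localCohomology.ringModIdeals (localCohomology.idealPowersDiagram J)).op

def HH (J : Ideal R) (n : ℕ) (Y : ModuleCat.{0} R) : ModuleCat.{0} R :=
  colimit (sysQ J ⋙ nExt n Y)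

def lcIso (J : Ideal R) (n : ℕ) (Y : ModuleCat.{0} R) :
    (localCohomology J (n+1)).obj Y ≅ HH J (n+1) Y :=
  colimitObjIsoColimitCompEvaluation
    (localCohomology.diagram (localCohomology.idealPowersDiagram J) (n+1)) Y ≪≫
  HasColimit.isoOfNatIso (Functor.isoWhiskerLeft (sysQ J) (bridge n Y))




open RingTheory.Sequence ModuleCat in
lemma depth_van (Q : ModuleCat.{0} R) (M : ModuleCat.{0} R) (rs : List R)
    (mem : ∀ r ∈ rs, ∃ k, r ^ k ∈ Module.annihilator R Q) (reg : IsWeaklyRegular M rs) :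
    ∀ i < rs.length, Subsingleton (Abelian.Ext Q M i) := by
  generalize len : rs.length = n
  induction n generalizing M rs with
  | zero => simp
  | succ n ih =>
    rintro i hi
    match rs with
    | [] => simp at len
    | a :: rs' =>
      obtain ⟨k, hk⟩ := mem a List.mem_cons_self
      simp only [isWeaklyRegular_cons_iff] at reg
      simp only [List.mem_cons, forall_eq_or_imp] at mem
      simp only [List.length_cons, Nat.add_left_inj] at len
      match i with
      | 0 =>
        have : Subsingleton (Q →ₗ[R] M) := by
          refine ⟨fun f g => ?_⟩
          ext x
          apply reg.1.pow k
          change a ^ k • f x = a ^ k • g x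
          rw [← map_smul, ← map_smul, Module.mem_annihilator.1 hk]
          simp
        exact (Abelian.Ext.addEquiv₀.trans ModuleCat.homAddEquiv).subsingleton
      | i + 1 =>
        let g := (AddCommGrpCat.ofHom ((Abelian.Ext.mk₀ (smulShortComplex M a).f).postcomp Q
          (add_zero (i + 1))))
        have mono_g : Mono g := by
          apply (Abelian.Ext.covariant_sequence_exact₁' Q reg.1.smulShortComplex_shortExact i (i + 1)
            rfl).mono_g ((AddCommGrpCat.isZero_of_iff_subsingleton.mpr ?_).eq_zero_of_src _)
          exact ih (ModuleCat.of R (QuotSMulTop a M)) rs' mem.2 reg.2 len i (by omega)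
        let gk := AddCommGrpCat.ofHom ((Abelian.Ext.mk₀ (M.smulShortComplex (a ^ k)).f).postcomp Q
          (add_zero (i + 1)))
        have mono_gk : Mono gk := by
          simp only [smulShortComplex_f_eq_smul_id, g, gk] at mono_g ⊢
          exact (Abelian.Ext.postcomp_smul_id_mono_iff (a ^ k) (i + 1)).mpr <|
            ((Abelian.Ext.postcomp_smul_id_mono_iff a (i + 1)).mp mono_g).pow k
        have zero_gk : gk = 0 := Abelian.Ext.postcomp_smul_id_eq_zero_of_mem_annihilator hk (i + 1)
        exact AddCommGrpCat.subsingleton_of_isZero (IsZero.of_mono_eq_zero _ zero_gk)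

abbrev Q (J : Ideal R) (t : ℕ) : ModuleCat.{0} R := ModuleCat.of R (R ⧸ J ^ t)

def shiftNat {S : ShortComplex (ModuleCat.{0} R)} (hS : S.ShortExact) (j : ℕ) :
    nExt j S.X₃ ⟶ nExt (j+1) S.X₁ where
  app X := ModuleCat.ofHom ((Abelian.Ext.bilinearCompOfLinear R X.unop S.X₃ S.X₁ j 1 (j+1) rfl).flip
    hS.extClass)
  naturality X Y f := by
    ext x
    exact Abelian.Ext.comp_assoc (Abelian.Ext.mk₀ f.unop) x hS.extClass (by omega) (by omega) (by omega)

lemma shift_bij {S : ShortComplex (ModuleCat.{0} R)} (hS : S.ShortExact) (j : ℕ) (X : ModuleCat.{0} R)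
    (h0 : Subsingleton (Abelian.Ext X S.X₂ j)) (h1 : Subsingleton (Abelian.Ext X S.X₂ (j+1))) :
    Function.Bijective ((shiftNat hS j).app (op X)) := by
  constructor
  · rw [injective_iff_map_eq_zero]
    intro a ha
    obtain ⟨b, rfl⟩ := Abelian.Ext.covariant_sequence_exact₃ X hS a rfl ha
    rw [Subsingleton.elim b 0]; simp; rfl
  · intro y
    obtain ⟨b, hb⟩ := Abelian.Ext.covariant_sequence_exact₁ X hS y (Subsingleton.elim _ _) rfl
    exact ⟨b, hb⟩

def shiftIso (J : Ideal R) {S : ShortComplex (ModuleCat.{0} R)} (hS : S.ShortExact) (j : ℕ)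
    (h0 : ∀ t, Subsingleton (Abelian.Ext (Q J t) S.X₂ j))
    (h1 : ∀ t, Subsingleton (Abelian.Ext (Q J t) S.X₂ (j+1))) :
    HH J j S.X₃ ≅ HH J (j+1) S.X₁ :=
  HasColimit.isoOfNatIso
    (@asIso _ _ _ _ (Functor.whiskerLeft (sysQ J) (shiftNat hS j))
      ((NatTrans.isIso_iff_isIso_app _).2 fun t =>
        (ConcreteCategory.isIso_iff_bijective _).2 (shift_bij hS j _ (h0 t.unop.unop) (h1 t.unop.unop))))

lemma HH_subsingleton (J : Ideal R) (j : ℕ) (Y : ModuleCat.{0} R)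
    (h : ∀ t (e : Abelian.Ext (Q J t) Y j), ∃ t' , ∃ hle : t ≤ t',
      (nExt j Y).map ((sysQ J).map (homOfLE hle).op.op) e = 0) : Subsingleton (HH J j Y) := by
  refine subsingleton_of_forall_eq 0 fun x => ?_
  obtain ⟨t, e, rfl⟩ := Concrete.colimit_exists_rep (sysQ J ⋙ nExt j Y) x
  obtain ⟨t', hle, h0⟩ := h t.unop.unop e
  have := congr($(colimit.w (sysQ J ⋙ nExt j Y) ((homOfLE hle).op.op)) e)
  refine this.symm.trans ?_
  refine (congrArg (colimit.ι (sysQ J ⋙ nExt j Y) (op (op t'))) h0).trans (map_zero _)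





open RingTheory.Sequence MvPolynomial in
lemma X_reg {σ F : Type} [Field F] (l : List σ) (hl : l.Nodup) :
    IsWeaklyRegular (MvPolynomial σ F) (l.map (X : σ → MvPolynomial σ F)) := by
  rw [isWeaklyRegular_iff]
  intro i hi
  have hi' : i < l.length := by simpa using hi
  have hI : (Ideal.ofList ((l.map (X : σ → MvPolynomial σ F)).take i) • ⊤ :
      Submodule (MvPolynomial σ F) (MvPolynomial σ F)) =
      Ideal.span (X '' {x | x ∈ l.take i}) := by
    rw [smul_eq_mul, Ideal.mul_top, Ideal.ofList, ← List.map_take]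
    congr 1
    ext y
    simp only [Set.mem_ofPred_eq, List.mem_map, Set.mem_image]
  rw [isSMulRegular_quotient_iff_mem_of_smul_mem]
  intro f hf
  rw [hI] at hf ⊢
  have hij : l[i] ∉ l.take i := by
    intro h
    obtain ⟨a, ha, hh⟩ := List.mem_take_iff_getElem.1 h
    have := (List.Nodup.getElem_inj_iff hl).1 hh
    omega
  rw [mem_ideal_span_X_image] at hf ⊢
  intro m hm
  have := hf (m + Finsupp.single l[i] 1) (by
    rw [List.getElem_map, smul_eq_mul, mul_comm, MvPolynomial.mem_support_iff, coeff_mul_X]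
    exact MvPolynomial.mem_support_iff.1 hm)
  obtain ⟨a, ha, h⟩ := this
  refine ⟨a, ha, ?_⟩
  have hne : l[i] ≠ a := by rintro rfl; exact hij ha
  simpa [Finsupp.single_apply, hne] using h

open RingTheory.Sequence MvPolynomial in
lemma free_van {F : Type} [Field F] (n : ℕ) (L : Type) [AddCommGroup L]
    [Module (MvPolynomial (Fin (n+1)) F) L] [Module.Free (MvPolynomial (Fin (n+1)) F) L]
    (t i : ℕ) (hi : i ≤ n) :
    Subsingleton (Abelian.Ext (Q (Ideal.span (Set.range X) : Ideal (MvPolynomial (Fin (n+1)) F)) t)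
      (ModuleCat.of _ L) i) := by
  have h1 := X_reg (F := F) (List.finRange (n+1)) (List.nodup_finRange _)
  have h2 := h1.isWeaklyRegular_lTensor (M₂ := L)
  rw [(TensorProduct.rid _ L).isWeaklyRegular_congr] at h2
  refine depth_van _ _ ((List.finRange (n+1)).map X) ?_ h2 i (by simp; omega)
  intro r hr
  refine ⟨t, ?_⟩
  rw [Ideal.annihilator_quotient]
  apply Ideal.pow_mem_pow
  obtain ⟨a, -, rfl⟩ := List.mem_map.1 hr
  exact Ideal.subset_span ⟨a, rfl⟩




/-- the `J`-power torsion submodule -/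
def gam (J : Ideal R) (E : Type) [AddCommGroup E] [Module R E] : Submodule R E where
  carrier := {x | ∃ c : ℕ, ∀ r ∈ J ^ c, r • x = 0}
  add_mem' := by
    rintro a b ⟨c, hc⟩ ⟨d, hd⟩
    refine ⟨max c d, fun r hr => ?_⟩
    rw [smul_add, hc r (Ideal.pow_le_pow_right (le_max_left _ _) hr),
      hd r (Ideal.pow_le_pow_right (le_max_right _ _) hr), add_zero]
  zero_mem' := ⟨0, by simp⟩
  smul_mem' := by
    rintro s a ⟨c, hc⟩
    exact ⟨c, fun r hr => by rw [smul_comm, hc r hr, smul_zero]⟩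

lemma mem_gam {J : Ideal R} {E : Type} [AddCommGroup E] [Module R E] {x : E} :
   x ∈ gam J E ↔ ∃ c : ℕ, ∀ r ∈ J ^ c, r • x = 0 := Iff.rfl

lemma gam_bound [IsNoetherianRing R] (J : Ideal R) {E M : Type} [AddCommGroup E] [Module R E]
    [AddCommGroup M] [Module R M] [IsNoetherian R M] (g : M →ₗ[R] E) (hg : ∀ m, g m ∈ gam J E) :
    ∃ c : ℕ, ∀ m, ∀ r ∈ J ^ c, r • g m = 0 := by
  let F : ℕ →o Submodule R M :=
    { toFun := fun c =>
       { carrier := {m | ∀ r ∈ J ^ c, r • g m = 0}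
         add_mem' := by
          intro a b ha hb r hr
          rw [map_add, smul_add, ha r hr, hb r hr, add_zero]
         zero_mem' := by intro r hr; simp
         smul_mem' := by
          intro s a ha r hr
          rw [map_smul, smul_comm, ha r hr, smul_zero] }
      monotone' := by
        intro a b hab m hm r hr
        exact hm r (Ideal.pow_le_pow_right hab hr) }
  obtain ⟨c, hc⟩ := monotone_stabilizes_iff_noetherian.2 (inferInstance : IsNoetherian R M) F
  refine ⟨c, fun m => ?_⟩
  obtain ⟨d, hd⟩ := hg m
  have h1 : m ∈ F d := hd
  have h2 : m ∈ F (max c d) := F.monotone (le_max_right _ _) h1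
  rw [← hc _ (le_max_left _ _)] at h2
  exact h2

lemma gam_baer [IsNoetherianRing R] (J : Ideal R) (E : Type) [AddCommGroup E] [Module R E]
    (hE : Module.Baer R E) : Module.Baer R (gam J E) := by
  intro I g
  obtain ⟨c, hc⟩ := gam_bound J ((gam J E).subtype ∘ₗ g) (fun m => (g m).2)
  obtain ⟨k, hk⟩ := Ideal.exists_pow_inf_eq_pow_smul J (M := R) I
  let φ : I →ₗ[R] R ⧸ J ^ (k + c) := (J ^ (k+c)).mkQ ∘ₗ I.subtype
  have hker : LinearMap.ker φ ≤ LinearMap.ker ((gam J E).subtype ∘ₗ g) := by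
    intro x hx
    have hx1 : (x : R) ∈ J ^ (k + c) := by
      have : φ x = 0 := hx
      exact (Submodule.Quotient.mk_eq_zero _).1 this
    have hx2 : (x : R) ∈ J ^ (k+c) • (⊤ : Submodule R R) ⊓ I :=
      ⟨by simpa using hx1, x.2⟩
    rw [hk _ (Nat.le_add_right _ _), Nat.add_sub_cancel_left] at hx2
    have hx3 : (x : R) ∈ (J ^ c • (⊤ : Submodule R I)).map I.subtype := by
      rw [Submodule.map_smul'', Submodule.map_top, Submodule.range_subtype]
      exact Submodule.smul_mono le_rfl inf_le_right hx2
    obtain ⟨y, hy, hyx⟩ := hx3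
    have : y = x := Subtype.ext hyx
    subst this
    have hle : J ^ c • (⊤ : Submodule R I) ≤ LinearMap.ker ((gam J E).subtype ∘ₗ g) := by
      rw [Submodule.smul_le]
      intro r hr m _
      rw [LinearMap.mem_ker, map_smul]
      exact hc m r hr
    exact hle hy
  obtain ⟨h, hh⟩ := hE.extension_property ((LinearMap.ker φ).liftQ φ le_rfl)
    (LinearMap.ker_eq_bot.1 (Submodule.ker_liftQ_eq_bot _ _ _ le_rfl))
    ((LinearMap.ker φ).liftQ _ hker)
  refine ⟨LinearMap.codRestrict _ (h ∘ₗ (J ^ (k+c)).mkQ) fun x => ⟨k + c, fun r hr => ?_⟩, ?_⟩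
  · rw [← map_smul]
    have : r • x ∈ J ^ (k+c) := by rw [smul_eq_mul]; exact Ideal.mul_mem_right _ _ hr
    rw [LinearMap.comp_apply, Submodule.mkQ_apply, (Submodule.Quotient.mk_eq_zero _).2 this, map_zero]
  · intro x hx
    apply Subtype.ext
    exact congr($hh ((LinearMap.ker φ).mkQ ⟨x, hx⟩))

def q (J : Ideal R) {t t' : ℕ} (h : t ≤ t') : Q J t' ⟶ Q J t :=
  ((sysQ J).map (homOfLE h).op.op).unop

lemma q_mk (J : Ideal R) {t t' : ℕ} (h : t ≤ t') (x : R) :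
   (q J h) (Submodule.Quotient.mk x : R ⧸ J ^ t') = (Submodule.Quotient.mk x : R ⧸ J ^ t) := rfl

lemma Q_hom_ext {J : Ideal R} {t : ℕ} {Y : ModuleCat.{0} R} {f g : Q J t ⟶ Y}
    (h : f (Submodule.Quotient.mk 1 : R ⧸ J ^ t) = g (Submodule.Quotient.mk 1 : R ⧸ J ^ t)) : f = g := by
  apply ModuleCat.hom_ext
  apply Submodule.linearMap_qext
  apply LinearMap.ext_ring
  exact h

def Qlift {J : Ideal R} {t : ℕ} {Y : ModuleCat.{0} R} (y : Y) (hy : ∀ r ∈ J ^ t, r • y = 0) :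
    Q J t ⟶ Y :=
  ModuleCat.ofHom (Submodule.liftQ _ (LinearMap.toSpanSingleton R Y y) (fun r hr => hy r hr))

lemma Qlift_one {J : Ideal R} {t : ℕ} {Y : ModuleCat.{0} R} (y : Y) (hy : ∀ r ∈ J ^ t, r • y = 0) :
    Qlift y hy (Submodule.Quotient.mk 1 : R ⧸ J ^ t) = y := one_smul R y

lemma shortExact_mk {A B C : Type} [AddCommGroup A] [AddCommGroup B] [AddCommGroup C] [Module R A]
    [Module R B] [Module R C] (f : A →ₗ[R] B) (g : B →ₗ[R] C) (hf : Function.Injective f)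
    (hg : Function.Surjective g) (h : Function.Exact f g) :
    (ShortComplex.mk (ModuleCat.ofHom f) (ModuleCat.ofHom g)
      (by ext x; exact h.apply_apply_eq_zero x)).ShortExact where
  exact := (ShortComplex.ShortExact.moduleCat_exact_iff_function_exact _).mpr h
  mono_f := (ModuleCat.mono_iff_injective _).2 hf
  epi_g := (ModuleCat.epi_iff_surjective _).2 hg

/-- every torsion module sits in a short exact sequence with torsion injective middle term -/
lemma tor_ses [IsNoetherianRing R] (J : Ideal R) (N : ModuleCat.{0} R) (hN : ∀ x : N, x ∈ gam J N) :
    ∃ (T C : Type) (_ : AddCommGroup T) (_ : Module R T) (_ : AddCommGroup C) (_ : Module R C)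
      (f : N →ₗ[R] T) (g : T →ₗ[R] C), Function.Injective f ∧ Function.Surjective g ∧
      Function.Exact f g ∧ (∀ x : T, x ∈ gam J T) ∧ Injective (ModuleCat.of R T) := by
  let E := Injective.under N
  let ι := (Injective.ι N).hom
  have hι : Function.Injective ι := (ModuleCat.mono_iff_injective _).1 inferInstance
  have : Injective (ModuleCat.of R E) := inferInstanceAs (Injective (Injective.under N))
  have hE : Module.Baer R E := Module.Baer.of_injective (Module.injective_module_of_injective_object R E)
  have := (gam_baer J E hE).injective
  let f : N →ₗ[R] gam J E := LinearMap.codRestrict _ ι fun x => by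
    obtain ⟨c, hc⟩ := hN x
    exact ⟨c, fun r hr => by rw [← map_smul, hc r hr, map_zero]⟩
  refine ⟨gam J E, gam J E ⧸ LinearMap.range f, inferInstance, inferInstance, inferInstance,
    inferInstance, f, Submodule.mkQ _, ?_, Submodule.mkQ_surjective _, ?_, ?_, ?_⟩
  · intro x y hxy
    exact hι congr(($hxy).1)
  · rw [LinearMap.exact_iff, Submodule.ker_mkQ]
  · rintro ⟨x, c, hc⟩
    exact ⟨c, fun r hr => Subtype.ext (hc r hr)⟩
  · exact Module.injective_object_of_injective_module R _

lemma tor_van [IsNoetherianRing R] (J : Ideal R) (j : ℕ) : ∀ (N : ModuleCat.{0} R)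
    (_ : ∀ x : N, x ∈ gam J N) (t : ℕ) (e : Abelian.Ext (Q J t) N (j+1)),
    ∃ t', ∃ hle : t ≤ t', (Abelian.Ext.mk₀ (q J hle)).comp e (zero_add _) = 0 := by
  induction j with
  | zero =>
    intro N hN t e
    obtain ⟨T, C, _, _, _, _, f, g, hf, hg, hfg, hT, hinj⟩ := tor_ses J N hN
    have hS := shortExact_mk f g hf hg hfg
    obtain ⟨x, hx⟩ := Abelian.Ext.covariant_sequence_exact₁ (Q J t) hS e
      (Abelian.Ext.eq_zero_of_injective (I := ModuleCat.of R T) _) (n₀ := 0) rfl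
    obtain ⟨u, rfl⟩ := Abelian.Ext.homEquiv₀.symm.surjective x
    change Q J t ⟶ ModuleCat.of R C at u
    obtain ⟨y, hy⟩ := hg (u (Submodule.Quotient.mk 1 : R ⧸ J ^ t))
    obtain ⟨c, hc⟩ := hT y
    have hc' : ∀ r ∈ J ^ (max t c), r • y = 0 :=
      fun r hr => hc r (Ideal.pow_le_pow_right (le_max_right _ _) hr)
    have key : q J (le_max_left t c) ≫ u = Qlift (Y := ModuleCat.of R T) y hc' ≫ ModuleCat.ofHom g := by
      apply Q_hom_ext
      refine Eq.trans ?_ ((congrArg g (Qlift_one (Y := ModuleCat.of R T) y hc')).trans hy).symm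
      rfl
    refine ⟨max t c, le_max_left _ _, ?_⟩
    rw [← hx]
    refine (Abelian.Ext.mk₀_comp_mk₀_assoc (q J (le_max_left t c)) u hS.extClass).trans ?_
    refine (congrArg (fun w => (Abelian.Ext.mk₀ w).comp hS.extClass (zero_add 1)) key).trans ?_
    refine (Abelian.Ext.mk₀_comp_mk₀_assoc _ _ hS.extClass).symm.trans ?_
    exact (congrArg (fun w => (Abelian.Ext.mk₀ _).comp w (zero_add 1)) hS.comp_extClass).trans
      (Abelian.Ext.comp_zero _ _ _ _ _)
  | succ j ih =>
    intro N hN t e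
    obtain ⟨T, C, _, _, _, _, f, g, hf, hg, hfg, hT, hinj⟩ := tor_ses J N hN
    have hS := shortExact_mk f g hf hg hfg
    obtain ⟨x, hx⟩ := Abelian.Ext.covariant_sequence_exact₁ (Q J t) hS e
      (Abelian.Ext.eq_zero_of_injective (I := ModuleCat.of R T) _) (n₀ := j + 1) rfl
    obtain ⟨t', hle, h0⟩ := ih (ModuleCat.of R C) (fun y => by
      obtain ⟨x, rfl⟩ := hg y
      obtain ⟨c, hc⟩ := hT x
      exact ⟨c, fun r hr => by rw [← map_smul, hc r hr, map_zero]⟩) t x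
    refine ⟨t', hle, ?_⟩
    rw [← hx]
    refine (Abelian.Ext.comp_assoc (Abelian.Ext.mk₀ (q J hle)) x hS.extClass (zero_add _) rfl
      (by omega)).symm.trans ?_
    exact (congrArg (fun w => Abelian.Ext.comp w hS.extClass rfl) h0).trans
      (Abelian.Ext.zero_comp _ _ _ _ _)

lemma HH_tor [IsNoetherianRing R] (J : Ideal R) (j : ℕ) (N : ModuleCat.{0} R)
    (hN : ∀ x : N, x ∈ gam J N) : Subsingleton (HH J (j+1) N) :=
  HH_subsingleton J (j+1) N fun t e => tor_van J j N hN t e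

def ev (J : Ideal R) (N : ModuleCat.{0} R) (t : ℕ) :
    ModuleCat.of R (Abelian.Ext (Q J t) N 0) ⟶ N :=
  ModuleCat.ofHom
    { toFun := fun e => (Abelian.Ext.linearEquiv₀ (R := R) e) (Submodule.Quotient.mk 1 : R ⧸ J ^ t)
      map_add' := fun a b => by rw [map_add]; rfl
      map_smul' := fun r a => by rw [map_smul]; rfl }

lemma ev_mk₀ (J : Ideal R) (N : ModuleCat.{0} R) (t : ℕ) (f : Q J t ⟶ N) :
    ev J N t (Abelian.Ext.mk₀ f) = f (Submodule.Quotient.mk 1 : R ⧸ J ^ t) := by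
  have : Abelian.Ext.linearEquiv₀ (R := R) (Abelian.Ext.mk₀ f) = f :=
    Abelian.Ext.homEquiv₀.right_inv f
  exact congr(ModuleCat.Hom.hom $this (Submodule.Quotient.mk 1 : R ⧸ J ^ t))

lemma ev_inj (J : Ideal R) (N : ModuleCat.{0} R) (t : ℕ) : Function.Injective (ev J N t) := by
  intro a b h
  obtain ⟨f, rfl⟩ := Abelian.Ext.homEquiv₀.symm.surjective a
  obtain ⟨g, rfl⟩ := Abelian.Ext.homEquiv₀.symm.surjective b
  have h' := (ev_mk₀ J N t f).symm.trans (h.trans (ev_mk₀ J N t g))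
  rw [Q_hom_ext h']

def evCocone (J : Ideal R) (N : ModuleCat.{0} R) : Cocone (sysQ J ⋙ nExt 0 N) where
  pt := N
  ι :=
    { app := fun t => ev J N t.unop.unop
      naturality := fun s t h => by
        ext e
        obtain ⟨f, rfl⟩ := Abelian.Ext.homEquiv₀.symm.surjective e
        refine Eq.trans ?_ (ev_mk₀ J N s.unop.unop f).symm
        refine (congrArg (ev J N t.unop.unop)
          (Abelian.Ext.mk₀_comp_mk₀ ((sysQ J).map h).unop f)).trans ?_
        exact ev_mk₀ J N t.unop.unop _ }

def HHzero (J : Ideal R) (N : ModuleCat.{0} R) (hN : ∀ x : N, x ∈ gam J N) : HH J 0 N ≅ N :=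
  @asIso _ _ _ _ (colimit.desc (sysQ J ⋙ nExt 0 N) (evCocone J N))
    ((ConcreteCategory.isIso_iff_bijective _).2 (by
      have hfac : ∀ t e, colimit.desc (sysQ J ⋙ nExt 0 N) (evCocone J N)
          (colimit.ι (sysQ J ⋙ nExt 0 N) t e) = ev J N t.unop.unop e := fun t e =>
        congr($(colimit.ι_desc (evCocone J N) t) e)
      constructor
      · rw [injective_iff_map_eq_zero]
        intro a ha
        obtain ⟨t, e, rfl⟩ := Concrete.colimit_exists_rep (sysQ J ⋙ nExt 0 N) a
        have h1 := (hfac t e).symm.trans ha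
        have h2 : e = 0 := ev_inj J N t.unop.unop (h1.trans (map_zero _).symm)
        rw [h2, map_zero]
        rfl
      · intro y
        obtain ⟨c, hc⟩ := hN y
        refine ⟨colimit.ι (sysQ J ⋙ nExt 0 N) (op (op c)) (Abelian.Ext.mk₀ (Qlift y hc)), ?_⟩
        refine (hfac _ _).trans ?_
        exact (ev_mk₀ J N c _).trans (Qlift_one y hc)))


end SyzAux

section SyzFinal
open SyzAux

lemma SyzAux.free_van' (L : Type) [AddCommGroup L] [Module (PolyS K n) L]
    (hL : Module.Free (PolyS K n) L) (i : ℕ) (hi : i ≤ n) (t : ℕ) :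
    Subsingleton (Abelian.Ext (Q (irrel K n) t) (ModuleCat.of (PolyS K n) L) i) :=
  free_van n L t i hi

lemma SyzAux.ses0 {N : Type} [AddCommGroup N] [Module (PolyS K n) N] (res : MinimalResolution K n N) :
    ∃ w, (ShortComplex.mk (ModuleCat.ofHom (LinearMap.range (res.d 0)).subtype)
      (ModuleCat.ofHom res.aug) w).ShortExact :=
  ⟨_, shortExact_mk _ _ (Submodule.injective_subtype _) res.aug_surjective (by
    rw [LinearMap.exact_iff, Submodule.range_subtype, res.exact0])⟩

lemma SyzAux.sesS {N : Type} [AddCommGroup N] [Module (PolyS K n) N] (res : MinimalResolution K n N)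
    (k : ℕ) :
    ∃ w, (ShortComplex.mk (ModuleCat.ofHom (LinearMap.range (res.d (k+1))).subtype)
      (ModuleCat.ofHom (res.d k).rangeRestrict) w).ShortExact :=
  ⟨_, shortExact_mk _ _ (Submodule.injective_subtype _) (res.d k).surjective_rangeRestrict (by
    rw [LinearMap.exact_iff, Submodule.range_subtype, LinearMap.ker_rangeRestrict, res.exact])⟩

lemma SyzAux.syz_iso {N : Type} [AddCommGroup N] [Module (PolyS K n) N]
    (res : MinimalResolution K n N) (a k : ℕ) (j : ℕ) (hj : j = k + 1 + a) (hn : j ≤ n) :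
    Nonempty (HH (irrel K n) j (ModuleCat.of _ (LinearMap.range (res.d k))) ≅
      HH (irrel K n) a (ModuleCat.of _ N)) := by
  induction k generalizing j with
  | zero =>
    obtain rfl : j = a + 1 := by omega
    obtain ⟨w, hS⟩ := ses0 K n res
    exact ⟨(shiftIso (irrel K n) hS a (free_van' K n _ (res.free 0) a (by omega))
      (free_van' K n _ (res.free 0) (a+1) hn)).symm⟩
  | succ k ih =>
    obtain rfl : j = (k + 1 + a) + 1 := by omega
    obtain ⟨w, hS⟩ := sesS K n res k
    obtain ⟨e⟩ := ih (k + 1 + a) rfl (by omega)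
    exact ⟨(shiftIso (irrel K n) hS (k + 1 + a)
      (free_van' K n _ (res.free (k+1)) (k + 1 + a) (by omega))
      (free_van' K n _ (res.free (k+1)) (k + 1 + a + 1) hn)).symm ≪≫ e⟩

lemma SyzAux.syz_van {N : Type} [AddCommGroup N] [Module (PolyS K n) N]
    (res : MinimalResolution K n N) (t i k : ℕ) (hik : i ≤ k) (hn : i ≤ n) :
    Subsingleton (Abelian.Ext (Q (irrel K n) t)
      (ModuleCat.of (PolyS K n) (LinearMap.range (res.d k))) i) := by
  induction i generalizing k with
  | zero =>
    have := free_van' K n _ (res.free k) 0 hn t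
    have : Mono (ModuleCat.ofHom (LinearMap.range (res.d k)).subtype) :=
      (ModuleCat.mono_iff_injective _).2 (Submodule.injective_subtype _)
    exact (Abelian.Ext.postcomp_mk₀_injective_of_mono (Q (irrel K n) t)
      (ModuleCat.ofHom (LinearMap.range (res.d k)).subtype)).subsingleton
  | succ i ih =>
    obtain ⟨k, rfl⟩ : ∃ m, k = m + 1 := ⟨k - 1, by omega⟩
    obtain ⟨w, hS⟩ := sesS K n res k
    have h1 := free_van' K n _ (res.free (k+1)) (i+1) hn t
    have h2 := ih k (by omega) (by omega)
    refine subsingleton_of_forall_eq 0 fun x => ?_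
    obtain ⟨y, rfl⟩ := Abelian.Ext.covariant_sequence_exact₁ (Q (irrel K n) t) hS x
      (h1.elim _ _) (n₀ := i) rfl
    obtain rfl : y = 0 := h2.elim _ _
    exact Abelian.Ext.zero_comp _ _ _ _ _

end SyzFinal

/-- For a finite length graded `S`-module `N` with `k`-th syzygy
bundle `P_k(N)` (the sheafification of `im(L_{k+1} → L_k)` in a minimal free
resolution), `H^k_*(P_k(N)) = N` and `H^i_*(P_k(N)) = 0` for all `1 ≤ i ≤ n-1`,
`i ≠ k`. -/
theorem syzygy_bundle_cohomology
    (K : Type) [Field K] (n : ℕ)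
    (N : Type) [AddCommGroup N] [Module (PolyS K n) N]
    (hNfl : IsGradedFiniteLength K n N)
    (res : MinimalResolution K n N)
    (k : ℕ) (hk1 : 1 ≤ k) (hk2 : k ≤ n - 1) :
    Nonempty (Hstar K n k ↥(LinearMap.range (res.d k)) ≅ ModuleCat.of (PolyS K n) N) ∧
    (∀ i : ℕ, 1 ≤ i → i ≤ n - 1 → i ≠ k →
      Subsingleton (Hstar K n i ↥(LinearMap.range (res.d k)))) := by
  obtain ⟨c, hc⟩ := hNfl.2
  have htor : ∀ x : (ModuleCat.of (PolyS K n) N), x ∈ SyzAux.gam (irrel K n) N :=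
    fun x => ⟨c, fun r hr => Module.mem_annihilator.1 (hc hr) x⟩
  have hN : IsNoetherianRing (PolyS K n) := inferInstance
  refine ⟨?_, fun i hi1 hi2 hik => ?_⟩
  · obtain ⟨e⟩ := SyzAux.syz_iso K n res 0 k (k+1) rfl (by omega)
    exact ⟨SyzAux.lcIso (irrel K n) k _ ≪≫ e ≪≫ SyzAux.HHzero (irrel K n) _ htor⟩
  · have key : Subsingleton (SyzAux.HH (irrel K n) (i+1)
        (ModuleCat.of (PolyS K n) (LinearMap.range (res.d k)))) := by
      rcases lt_or_gt_of_ne hik with h | h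
      · exact SyzAux.HH_subsingleton _ _ _ fun t e => ⟨t, le_rfl, by
          have := SyzAux.syz_van K n res t (i+1) k h (by omega)
          exact (congrArg _ (this.elim e 0)).trans (map_zero _)⟩
      · obtain ⟨e⟩ := SyzAux.syz_iso K n res (i - k - 1 + 1) k (i+1) (by omega) (by omega)
        have := SyzAux.HH_tor (irrel K n) (i - k - 1) (ModuleCat.of (PolyS K n) N) htor
        exact e.toLinearEquiv.toEquiv.subsingleton
    exact (SyzAux.lcIso (irrel K n) i
      (ModuleCat.of (PolyS K n) (LinearMap.range (res.d k)))).toLinearEquiv.toEquiv.subsingleton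
end
end

section
/- Let N be a nonzero cyclic graded S-module of finite length on P^n (n ≥ 4), with second syzygy bundle P_2 = P_2(N). Then H^3_*(P_2 ⊗ P_2) ≅ coker(L_2 ⊗ N → L_1 ⊗ N) ≠ 0, and consequently H^3_*(Λ²P_2) ≠ 0. -/
/-!
Background setup (the paper works on projective space `ℙⁿ` over a field `K`):
we encode a coherent sheaf on `ℙⁿ_K` by a module `M` over the homogeneous coordinate
ring `S = K[X₀,…,Xₙ]` (namely `M = Γ_*` of the sheaf), and the intermediate cohomology
module `H^i_*(F) = ⊕_ν H^i(ℙⁿ, F(ν))` (for `i ≥ 1`) by the local cohomology module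
`H^{i+1}_𝔪(M)` at the irrelevant maximal ideal `𝔪 = (X₀,…,Xₙ)`, to which it is
canonically isomorphic.
-/

open CategoryTheory TensorProduct

noncomputable section

variable (K : Type) [Field K] (n : ℕ)

/-- The second symmetric power `S²M` of a module. -/
def Sym2M (R : Type) [CommRing R] (M : Type) [AddCommGroup M] [Module R M] : Type :=
  (TensorProduct R M M) ⧸
    Submodule.span R {z : TensorProduct R M M | ∃ x y : M, z = x ⊗ₜ[R] y - y ⊗ₜ[R] x}

instance (R : Type) [CommRing R] (M : Type) [AddCommGroup M] [Module R M] :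
    AddCommGroup (Sym2M R M) := by unfold Sym2M; infer_instance

instance (R : Type) [CommRing R] (M : Type) [AddCommGroup M] [Module R M] :
    Module R (Sym2M R M) := by unfold Sym2M; infer_instance

noncomputable section

namespace LC
open CategoryTheory.Abelian

variable {R : Type} [CommRing R] (J : Ideal R)

/-- The module `R/J^k`. -/
abbrev Xk (k : ℕ) : ModuleCat.{0} R := ModuleCat.of R (R ⧸ J ^ k)

/-- The projection `R/J^l → R/J^k`. -/
def tk {k l : ℕ} (h : k ≤ l) : Xk J l ⟶ Xk J k :=
  ModuleCat.ofHom (Submodule.mapQ _ _ LinearMap.id (Ideal.pow_le_pow_right h))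

lemma tk_refl (k : ℕ) : tk J (le_refl k) = 𝟙 _ := by
  ext
  simp [tk]

lemma tk_comp {k l p : ℕ} (h : k ≤ l) (h' : l ≤ p) : tk J h' ≫ tk J h = tk J (h.trans h') := by
  ext
  simp [tk]

/-- Transition maps on `Ext`. -/
def tr (i : ℕ) (M : ModuleCat.{0} R) (k l : ℕ) (h : k ≤ l) :
    Abelian.Ext (Xk J k) M i →ₗ[R] Abelian.Ext (Xk J l) M i where
  toFun e := (Ext.mk₀ (tk J h)).comp e (zero_add i)
  map_add' := by intros; simp
  map_smul' := by intros; simp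

@[simp] lemma tr_apply (i : ℕ) (M : ModuleCat.{0} R) (k l : ℕ) (h : k ≤ l)
    (e : Abelian.Ext (Xk J k) M i) :
    tr J i M k l h e = (Ext.mk₀ (tk J h)).comp e (zero_add i) := rfl

instance dsys (i : ℕ) (M : ModuleCat.{0} R) :
    DirectedSystem (fun k => Abelian.Ext (Xk J k) M i) (fun k l h => tr J i M k l h) where
  map_self k x := by simp [tk_refl]
  map_map k l p h h' x := by
    simp only [tr_apply]
    rw [← tk_comp J h h', ← Ext.mk₀_comp_mk₀, Ext.comp_assoc_of_second_deg_zero]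

/-- Local cohomology as a direct limit of derived-category `Ext`s. -/
abbrev HC (i : ℕ) (M : ModuleCat.{0} R) : Type :=
  Module.DirectLimit (fun k => Abelian.Ext (Xk J k) M i) (tr J i M)

/-- Unbundled. -/
abbrev H (i : ℕ) (M : Type) [AddCommGroup M] [Module R M] : Type := HC J i (ModuleCat.of R M)

/-- Inclusion of the `k`-th stage. -/
abbrev io (i : ℕ) (M : ModuleCat.{0} R) (k : ℕ) : Abelian.Ext (Xk J k) M i →ₗ[R] HC J i M :=
  Module.DirectLimit.of R ℕ (fun k => Abelian.Ext (Xk J k) M i) (tr J i M) k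

lemma io_tr (i : ℕ) (M : ModuleCat.{0} R) {k l : ℕ} (h : k ≤ l) (e : Abelian.Ext (Xk J k) M i) :
    io J i M l (tr J i M k l h e) = io J i M k e := Module.DirectLimit.of_f

lemma io_surj {i : ℕ} {M : ModuleCat.{0} R} (z : HC J i M) : ∃ k e, io J i M k e = z :=
  Module.DirectLimit.exists_of z

lemma io_zero {i : ℕ} {M : ModuleCat.{0} R} {k : ℕ} {e : Abelian.Ext (Xk J k) M i}
    (h : io J i M k e = 0) : ∃ l, ∃ h : k ≤ l, tr J i M k l h e = 0 :=
  Module.DirectLimit.of.zero_exact h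

/-- Composition on the right with an Ext class, on the limit. -/
def post {M M' : ModuleCat.{0} R} {a : ℕ} (c : Abelian.Ext M M' a) {i j : ℕ} (h : i + a = j) :
    HC J i M →ₗ[R] HC J j M' :=
  Module.DirectLimit.map (G := fun k => Abelian.Ext (Xk J k) M i) (f := tr J i M)
    (G' := fun k => Abelian.Ext (Xk J k) M' j) (f' := tr J j M')
    (fun k => { toFun := fun e => e.comp c h
                map_add' := by intros; simp
                map_smul' := by intros; simp })
    (by
      intro k l hkl
      ext e
      simp only [LinearMap.comp_apply, LinearMap.coe_mk, AddHom.coe_mk, tr_apply]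
      rw [Ext.comp_assoc]
      lia)

lemma post_io {M M' : ModuleCat.{0} R} {a : ℕ} (c : Abelian.Ext M M' a) {i j : ℕ} (h : i + a = j)
    (k : ℕ) (e : Abelian.Ext (Xk J k) M i) :
    post J c h (io J i M k e) = io J j M' k (e.comp c h) := by
  simp [post, io]

section
variable {A B C A' B' C' : Type} [AddCommGroup A] [Module R A] [AddCommGroup B] [Module R B]
  [AddCommGroup C] [Module R C] [AddCommGroup A'] [Module R A'] [AddCommGroup B'] [Module R B']
  [AddCommGroup C'] [Module R C']

/-- Functoriality. -/
def Hm (i : ℕ) (f : A →ₗ[R] B) : H J i A →ₗ[R] H J i B :=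
  post J (Ext.mk₀ (ModuleCat.ofHom f)) (add_zero i)

lemma Hm_io (i : ℕ) (f : A →ₗ[R] B) (k : ℕ) (e) :
    Hm J i f (io J i _ k e) = io J i _ k (e.comp (Ext.mk₀ (ModuleCat.ofHom f)) (add_zero i)) :=
  post_io _ _ _ _ _

lemma Hm_id (i : ℕ) (z : H J i A) : Hm J i (LinearMap.id : A →ₗ[R] A) z = z := by
  obtain ⟨k, e, rfl⟩ := io_surj J z
  rw [Hm_io]
  simp

lemma Hm_comp (i : ℕ) (g : B →ₗ[R] C) (f : A →ₗ[R] B) (z : H J i A) :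
    Hm J i (g ∘ₗ f) z = Hm J i g (Hm J i f z) := by
  obtain ⟨k, e, rfl⟩ := io_surj J z
  simp only [Hm_io, ModuleCat.ofHom_comp]
  rw [← Ext.mk₀_comp_mk₀, Ext.comp_assoc_of_second_deg_zero]

lemma Hm_add (i : ℕ) (f g : A →ₗ[R] B) (z : H J i A) :
    Hm J i (f + g) z = Hm J i f z + Hm J i g z := by
  obtain ⟨k, e, rfl⟩ := io_surj J z
  rw [Hm_io, Hm_io, Hm_io, ← map_add,
    show ModuleCat.ofHom (f + g) = ModuleCat.ofHom f + ModuleCat.ofHom g from rfl,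
    Ext.mk₀_add, Ext.comp_add]

lemma Hm_smul (i : ℕ) (r : R) (f : A →ₗ[R] B) (z : H J i A) :
    Hm J i (r • f) z = r • Hm J i f z := by
  obtain ⟨k, e, rfl⟩ := io_surj J z
  simp only [Hm_io, ← map_smul]
  rw [show ModuleCat.ofHom (r • f) = r • ModuleCat.ofHom f from rfl]
  simp [Ext.mk₀_smul]

lemma Hm_zero (i : ℕ) (z : H J i A) : Hm J i (0 : A →ₗ[R] B) z = 0 := by
  have := Hm_smul J i (0 : R) (0 : A →ₗ[R] B) z
  simpa using this

/-- A short exact sequence. -/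
structure SES (f : A →ₗ[R] B) (g : B →ₗ[R] C) : Prop where
  inj : Function.Injective f
  ex : Function.Exact f g
  surj : Function.Surjective g

/-- The short complex. -/
abbrev SES.sc {f : A →ₗ[R] B} {g : B →ₗ[R] C} (h : SES f g) : ShortComplex (ModuleCat.{0} R) :=
  ShortComplex.mk (ModuleCat.ofHom f) (ModuleCat.ofHom g)
    (by ext x; exact (h.ex _).2 ⟨x, rfl⟩)

lemma SES.se {f : A →ₗ[R] B} {g : B →ₗ[R] C} (h : SES f g) : h.sc.ShortExact where
  exact := by
    rw [ShortComplex.ShortExact.moduleCat_exact_iff_function_exact]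
    exact h.ex
  mono_f := by
    rw [ModuleCat.mono_iff_injective]
    exact h.inj
  epi_g := by
    rw [ModuleCat.epi_iff_surjective]
    exact h.surj

/-- The connecting map. -/
def δ {f : A →ₗ[R] B} {g : B →ₗ[R] C} (h : SES f g) (i : ℕ) : H J i C →ₗ[R] H J (i + 1) A :=
  post J h.se.extClass rfl

lemma δ_io {f : A →ₗ[R] B} {g : B →ₗ[R] C} (h : SES f g) (i : ℕ) (k : ℕ) (e) :
    δ J h i (io J i _ k e) = io J (i + 1) _ k (e.comp h.se.extClass rfl) :=
  post_io _ _ _ _ _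

lemma exact₂ {f : A →ₗ[R] B} {g : B →ₗ[R] C} (h : SES f g) (i : ℕ) :
    Function.Exact (Hm J i f) (Hm J i g) := by
  intro z
  constructor
  · intro hz
    obtain ⟨k, e, rfl⟩ := io_surj J z
    rw [Hm_io] at hz
    obtain ⟨l, hl, hz⟩ := io_zero J hz
    obtain ⟨x, hx⟩ := Ext.covariant_sequence_exact₂ _ h.se (tr J i _ k l hl e) (by
      rw [tr_apply] at hz ⊢
      rw [Ext.comp_assoc]
      · exact hz
      · lia)
    refine ⟨io J i _ l x, ?_⟩
    rw [Hm_io]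
    erw [hx]
    rw [io_tr]
  · rintro ⟨y, rfl⟩
    rw [← Hm_comp, show g ∘ₗ f = 0 from LinearMap.ext fun x => (h.ex _).2 ⟨x, rfl⟩, Hm_zero]

lemma exact₃ {f : A →ₗ[R] B} {g : B →ₗ[R] C} (h : SES f g) (i : ℕ) :
    Function.Exact (Hm J i g) (δ J h i) := by
  intro z
  constructor
  · intro hz
    obtain ⟨k, e, rfl⟩ := io_surj J z
    rw [δ_io] at hz
    obtain ⟨l, hl, hz⟩ := io_zero J hz
    obtain ⟨x, hx⟩ := Ext.covariant_sequence_exact₃ _ h.se (tr J i _ k l hl e) rfl (by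
      rw [tr_apply] at hz ⊢
      rw [Ext.comp_assoc]
      · exact hz
      · lia)
    refine ⟨io J i _ l x, ?_⟩
    rw [Hm_io]
    erw [hx]
    rw [io_tr]
  · rintro ⟨y, rfl⟩
    obtain ⟨k, e, rfl⟩ := io_surj J y
    rw [Hm_io, δ_io, Ext.comp_assoc_of_second_deg_zero]
    erw [h.se.comp_extClass]
    simp

lemma exact₁ {f : A →ₗ[R] B} {g : B →ₗ[R] C} (h : SES f g) (i : ℕ) :
    Function.Exact (δ J h i) (Hm J (i + 1) f) := by
  intro z
  constructor
  · intro hz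
    obtain ⟨k, e, rfl⟩ := io_surj J z
    rw [Hm_io] at hz
    obtain ⟨l, hl, hz⟩ := io_zero J hz
    obtain ⟨x, hx⟩ := Ext.covariant_sequence_exact₁ _ h.se (tr J (i + 1) _ k l hl e) (by
      rw [tr_apply] at hz ⊢
      rw [Ext.comp_assoc]
      · exact hz
      · lia) rfl
    refine ⟨io J i _ l x, ?_⟩
    rw [δ_io]
    erw [hx]
    rw [io_tr]
  · rintro ⟨y, rfl⟩
    obtain ⟨k, e, rfl⟩ := io_surj J y
    rw [δ_io, Hm_io, Ext.comp_assoc_of_third_deg_zero]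
    erw [h.se.extClass_comp]
    simp

lemma δ_nat {f : A →ₗ[R] B} {g : B →ₗ[R] C} (h : SES f g)
    {f' : A' →ₗ[R] B'} {g' : B' →ₗ[R] C'} (h' : SES f' g')
    (a : A →ₗ[R] A') (b : B →ₗ[R] B') (c : C →ₗ[R] C')
    (hab : f' ∘ₗ a = b ∘ₗ f) (hbc : g' ∘ₗ b = c ∘ₗ g) (i : ℕ) (z : H J i C) :
    δ J h' i (Hm J i c z) = Hm J (i + 1) a (δ J h i z) := by
  obtain ⟨k, e, rfl⟩ := io_surj J z
  rw [δ_io, Hm_io, Hm_io, δ_io]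
  let φ : h.sc ⟶ h'.sc :=
    { τ₁ := ModuleCat.ofHom a, τ₂ := ModuleCat.ofHom b, τ₃ := ModuleCat.ofHom c
      comm₁₂ := by ext x; exact LinearMap.congr_fun hab x
      comm₂₃ := by ext x; exact LinearMap.congr_fun hbc x }
  have := ShortComplex.ShortExact.extClass_naturality h.se h'.se φ
  rw [Ext.comp_assoc_of_second_deg_zero, Ext.comp_assoc_of_third_deg_zero]
  congr 2
  exact this.symm

end
end LC
end

noncomputable section

namespace LC
open CategoryTheory.Abelian Opposite

variable {R : Type} [CommRing R]

section Compare
variable {X : ModuleCat.{0} R} (P : ProjectiveResolution X) (Y : ModuleCat.{0} R) 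

/-- The Hom functor. -/
abbrev Fun : ModuleCat.{0} R ⥤ (ModuleCat.{0} R)ᵒᵖ := ((linearYoneda R (ModuleCat.{0} R)).obj Y).rightOp

/-- The Hom complex. -/
abbrev Gc : ChainComplex (ModuleCat.{0} R)ᵒᵖ ℕ := ((Fun Y).mapHomologicalComplex _).obj P.complex

abbrev oldExt (X Y : ModuleCat.{0} R) (n : ℕ) : ModuleCat.{0} R := 
  ((Ext R (ModuleCat.{0} R) n).obj (op X)).obj Y

abbrev Zc (n : ℕ) : ModuleCat.{0} R := unop ((Gc P Y).opcycles n)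

def iZ (n : ℕ) : Zc P Y n ⟶ ModuleCat.of R (P.complex.X n ⟶ Y) := ((Gc P Y).pOpcycles n).unop

def isoL (n : ℕ) : ((Fun Y).leftDerived n).obj X ≅ (Gc P Y).homology n :=
  P.isoLeftDerivedObj (Fun Y) n

def pZ (n : ℕ) : Zc P Y n ⟶ oldExt X Y n := 
  ((isoL P Y n).hom ≫ (Gc P Y).homologyι n).unop

lemma iZ_inj (n : ℕ) : Function.Injective (iZ P Y n) := by
  rw [← ModuleCat.mono_iff_injective]
  exact @unop_mono_of_epi (ModuleCat.{0} R) _ _ _ ((Gc P Y).pOpcycles n) inferInstance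

lemma pZ_surj (n : ℕ) : Function.Surjective (pZ P Y n) := by
  rw [← ModuleCat.epi_iff_surjective]
  exact @unop_epi_of_mono (ModuleCat.{0} R) _ _ _ ((isoL P Y n).hom ≫ (Gc P Y).homologyι n) inferInstance

lemma iZ_cocycle (n : ℕ) (z : Zc P Y n) : P.complex.d (n+1) n ≫ (show P.complex.X n ⟶ Y from iZ P Y n z) = 0 := by
  have h := (Gc P Y).d_pOpcycles (n+1) n
  have h2 := congrArg (fun f => (ConcreteCategory.hom f.unop) z) h
  exact h2

lemma iZ_exists (n : ℕ) (f : P.complex.X n ⟶ Y) (hf : P.complex.d (n+1) n ≫ f = 0) :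
    ∃ z, iZ P Y n z = f := by
  let k : ModuleCat.of R R ⟶ ModuleCat.of R (P.complex.X n ⟶ Y) := 
    ModuleCat.ofHom (LinearMap.toSpanSingleton R _ f)
  let k' : (Gc P Y).X n ⟶ op (ModuleCat.of R R) := k.op
  have hk : (Gc P Y).d (n+1) n ≫ k' = 0 := by
    apply Quiver.Hom.unop_inj
    refine ModuleCat.hom_ext (LinearMap.ext_ring ?_)
    show P.complex.d (n+1) n ≫ ((1 : R) • f) = 0
    rw [one_smul, hf]
  let m := (Gc P Y).descOpcycles k' (n+1) (by simp) hk
  have hm := (Gc P Y).p_descOpcycles k' (n+1) (by simp) hk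
  refine ⟨m.unop (1 : R), ?_⟩
  have h2 := congrArg (fun f => (ConcreteCategory.hom f.unop) (1:R)) hm
  refine Eq.trans h2 ?_
  show (1 : R) • f = f
  rw [one_smul]

lemma pZ_zero_iff (n : ℕ) (z : Zc P Y (n+1)) : 
    pZ P Y (n+1) z = 0 ↔ ∃ g : P.complex.X n ⟶ Y, P.complex.d (n+1) n ≫ g = iZ P Y (n+1) z := by
  have e1 : (ShortComplex.mk ((isoL P Y (n+1)).hom ≫ (Gc P Y).homologyι (n+1)) ((Gc P Y).fromOpcycles (n+1) n) (by simp)).Exact := by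
    have e0 := ShortComplex.exact_of_f_is_kernel (ShortComplex.mk _ _ ((Gc P Y).homologyι_comp_fromOpcycles (n+1) n)) ((Gc P Y).homologyIsKernel (n+1) n (by simp))
    refine ShortComplex.exact_of_iso ?_ e0
    exact ShortComplex.isoMk (isoL P Y (n+1)).symm (Iso.refl _) (Iso.refl _) (by simp) (by simp)
  have e2 := e1.unop
  rw [ShortComplex.moduleCat_exact_iff] at e2
  have key : ∀ g : P.complex.X n ⟶ Y, iZ P Y (n+1) (((Gc P Y).fromOpcycles (n+1) n).unop g) = P.complex.d (n+1) n ≫ g := by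
    intro g
    have h := (Gc P Y).p_fromOpcycles (n+1) n
    exact congrArg (fun f => (ConcreteCategory.hom f.unop) g) h
  constructor
  · intro h
    obtain ⟨g, hg⟩ := e2 z h
    refine ⟨g, ?_⟩
    exact (key g).symm.trans (congrArg (iZ P Y (n+1)) hg)
  · rintro ⟨g, hg⟩
    rw [← key] at hg
    have := iZ_inj _ _ _ hg
    rw [← this]
    have h0 : ((isoL P Y (n+1)).hom ≫ (Gc P Y).homologyι (n+1)) ≫ (Gc P Y).fromOpcycles (n+1) n = 0 := by simp
    exact congrArg (fun f => (ConcreteCategory.hom f.unop) g) h0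

/-- The comparison map from cocycles to Ext. -/
def psi (n : ℕ) : Zc P Y n →ₗ[R] Abelian.Ext X Y n where
  toFun z := P.extMk (iZ P Y n z) (n+1) rfl (iZ_cocycle P Y n z)
  map_add' x y := by
    rw [P.add_extMk]
    congr 1
    exact map_add (iZ P Y n).hom x y
  map_smul' r x := by
    rw [RingHom.id_apply, Ext.smul_eq_comp_mk₀, P.extMk_comp_mk₀]
    congr 1
    refine (map_smul (iZ P Y n).hom r x).trans ?_
    simp

lemma psi_surj (n : ℕ) : Function.Surjective (psi P Y n) := by
  intro a
  obtain ⟨f, hf, rfl⟩ := P.extMk_surjective a (n+1) rfl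
  obtain ⟨z, rfl⟩ := iZ_exists P Y n f hf
  exact ⟨z, rfl⟩

lemma psi_ker (n : ℕ) : LinearMap.ker (psi P Y (n+1)) = LinearMap.ker (pZ P Y (n+1)).hom := by
  ext z
  rw [LinearMap.mem_ker, LinearMap.mem_ker]
  refine Iff.trans ?_ (pZ_zero_iff P Y n z).symm
  exact P.extMk_eq_zero_iff (iZ P Y (n+1) z) (n+2) rfl (iZ_cocycle P Y (n+1) z) n rfl

def Phi (n : ℕ) : oldExt X Y (n+1) ≃ₗ[R] Abelian.Ext X Y (n+1) :=
  (LinearMap.quotKerEquivOfSurjective (pZ P Y (n+1)).hom (pZ_surj P Y (n+1))).symm.trans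
   ((Submodule.quotEquivOfEq _ _ (psi_ker P Y n).symm).trans 
    (LinearMap.quotKerEquivOfSurjective (psi P Y (n+1)) (psi_surj P Y (n+1))))

lemma Phi_pZ (n : ℕ) (z : Zc P Y (n+1)) : Phi P Y n (pZ P Y (n+1) z) = psi P Y (n+1) z := by
  unfold Phi
  have : (LinearMap.quotKerEquivOfSurjective (pZ P Y (n+1)).hom (pZ_surj P Y (n+1))).symm (pZ P Y (n+1) z) = Submodule.Quotient.mk z := by
    rw [LinearEquiv.symm_apply_eq]; rfl
  rw [LinearEquiv.trans_apply, this]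
  rfl

end Compare

lemma Phi_nat {X X' : ModuleCat.{0} R} (P : ProjectiveResolution X) (P' : ProjectiveResolution X') (Y : ModuleCat.{0} R) (g : X' ⟶ X) (n : ℕ) (e : oldExt X Y (n+1)) :
   Phi P' Y n ((((Ext R (ModuleCat.{0} R) (n+1)).map g.op).app Y).hom e) = (Ext.mk₀ g).comp (Phi P Y n e) (zero_add _) := by
  obtain ⟨z, rfl⟩ := pZ_surj P Y (n+1) e
  let φ : ProjectiveResolution.Hom P' P g := 
    { hom := ProjectiveResolution.lift g P' P
      hom_f_zero_comp_π_f_zero := ProjectiveResolution.lift_commutes_zero g P' P }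
  let z' : Zc P' Y (n+1) := (HomologicalComplex.opcyclesMap (((Fun Y).mapHomologicalComplex _).map φ.hom) (n+1)).unop z
  have h1 : (((Ext R (ModuleCat.{0} R) (n+1)).map g.op).app Y).hom (pZ P Y (n+1) z) = pZ P' Y (n+1) z' := by
    have a1 := ProjectiveResolution.isoLeftDerivedObj_hom_naturality g P' P φ.hom φ.hom_f_zero_comp_π_f_zero (Fun Y) (n+1)
    have a1' : ((Fun Y).leftDerived (n+1)).map g ≫ (isoL P Y (n+1)).hom = (isoL P' Y (n+1)).hom ≫ HomologicalComplex.homologyMap (((Fun Y).mapHomologicalComplex _).map φ.hom) (n+1) := a1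
    have a2 := HomologicalComplex.homologyι_naturality (((Fun Y).mapHomologicalComplex _).map φ.hom) (n+1)
    have a3 : ((Fun Y).leftDerived (n+1)).map g ≫ ((isoL P Y (n+1)).hom ≫ (Gc P Y).homologyι (n+1)) = ((isoL P' Y (n+1)).hom ≫ (Gc P' Y).homologyι (n+1)) ≫ HomologicalComplex.opcyclesMap (((Fun Y).mapHomologicalComplex _).map φ.hom) (n+1) := by
      rw [reassoc_of% a1', Category.assoc, a2]
    exact congrArg (fun f => (ConcreteCategory.hom f.unop) z) a3
  have h2 : iZ P' Y (n+1) z' = φ.hom.f (n+1) ≫ (show P.complex.X (n+1) ⟶ Y from iZ P Y (n+1) z) := by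
    have h := HomologicalComplex.p_opcyclesMap (((Fun Y).mapHomologicalComplex _).map φ.hom) (n+1)
    exact congrArg (fun f => (ConcreteCategory.hom f.unop) z) h
  rw [h1, Phi_pZ, Phi_pZ]
  refine Eq.trans ?_ (ProjectiveResolution.mk₀_comp_extMk (iZ P Y (n+1) z) (n+2) rfl (iZ_cocycle P Y (n+1) z) φ).symm
  show P'.extMk (iZ P' Y (n+1) z') (n+2) rfl (iZ_cocycle P' Y (n+1) z') = _
  congr 1


section Colim
open Limits localCohomology
variable (J : Ideal R) (M : ModuleCat.{0} R) (i : ℕ)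

abbrev Dg : ℕᵒᵖᵒᵖ ⥤ ModuleCat.{0} R :=
  diagram (idealPowersDiagram J) (i+1) ⋙ (evaluation (ModuleCat.{0} R) (ModuleCat.{0} R)).obj M

abbrev cc : Cocone (Dg J M i) := 
  ((evaluation (ModuleCat.{0} R) (ModuleCat.{0} R)).obj M).mapCocone (colimit.cocone (diagram (idealPowersDiagram J) (i+1)))

def ccl : IsColimit (cc J M i) := isColimitOfPreserves _ (colimit.isColimit _)

/-- the stage comparison -/
def Ph (k : ℕ) : oldExt (Xk J k) M (i+1) ≃ₗ[R] Abelian.Ext (Xk J k) M (i+1) := Phi (projectiveResolution _) M i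

lemma Ph_nat {k l : ℕ} (h : k ≤ l) (e : oldExt (Xk J k) M (i+1)) : 
    Ph J M i l ((((Ext R (ModuleCat.{0} R) (i+1)).map (tk J h).op).app M).hom e) = tr J (i+1) M k l h (Ph J M i k e) :=
  Phi_nat _ _ _ _ _ _

def cι (k : ℕ) : oldExt (Xk J k) M (i+1) →ₗ[R] ((localCohomology J (i+1)).obj M) := ((cc J M i).ι.app (op (op k))).hom

lemma cι_tr {k l : ℕ} (h : k ≤ l) (e : oldExt (Xk J k) M (i+1)) : 
    cι J M i l ((((Ext R (ModuleCat.{0} R) (i+1)).map (tk J h).op).app M).hom e) = cι J M i k e := by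
  have := (cc J M i).w (homOfLE h).op.op
  exact congrArg (fun f => ModuleCat.Hom.hom f e) this

def cmp : HC J (i+1) M →ₗ[R] ((localCohomology J (i+1)).obj M) :=
  Module.DirectLimit.lift R ℕ _ _ (fun k => cι J M i k ∘ₗ (Ph J M i k).symm.toLinearMap) (by
    intro k l h x
    obtain ⟨x, rfl⟩ := (Ph J M i k).surjective x
    rw [← Ph_nat]
    simp only [LinearMap.comp_apply, LinearEquiv.coe_coe, LinearEquiv.symm_apply_apply]
    exact cι_tr J M i h x)

lemma cmp_io (k : ℕ) (x) : cmp J M i (io J (i+1) M k x) = cι J M i k ((Ph J M i k).symm x) := by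
  unfold cmp
  exact Module.DirectLimit.lift_of _ _ _

lemma cmp_bij : Function.Bijective (cmp J M i) := by
  constructor
  · rw [injective_iff_map_eq_zero]
    intro a ha
    obtain ⟨k, x, rfl⟩ := io_surj J a
    rw [cmp_io] at ha
    obtain ⟨y, rfl⟩ := (Ph J M i k).surjective x
    rw [LinearEquiv.symm_apply_apply] at ha
    have h0 : (ConcreteCategory.hom ((cc J M i).ι.app (op (op k)))) y = (ConcreteCategory.hom ((cc J M i).ι.app (op (op k)))) 0 := by
      rw [map_zero]; exact ha
    obtain ⟨l, f, g, hfg⟩ := Concrete.isColimit_exists_of_rep_eq _ (ccl J M i) _ _ h0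
    have hl : k ≤ l.unop.unop := leOfHom f.unop.unop
    rw [← io_tr J _ _ hl, ← Ph_nat]
    have : ((((Ext R (ModuleCat.{0} R) (i+1)).map (tk J hl).op).app M).hom y) = 0 := by
      refine Eq.trans hfg ?_
      exact map_zero ((Dg J M i).map g).hom
    rw [this, map_zero, map_zero]
  · intro z
    obtain ⟨k, y, hy⟩ := Concrete.isColimit_exists_rep _ (ccl J M i) z
    refine ⟨io J (i+1) M k.unop.unop (Ph J M i _ y), ?_⟩
    rw [cmp_io]
    refine (congrArg _ ((Ph J M i k.unop.unop).symm_apply_apply y)).trans hy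

/-- The comparison isomorphism. -/
def cmpEquiv : HC J (i+1) M ≃ₗ[R] ((localCohomology J (i+1)).obj M) := LinearEquiv.ofBijective _ (cmp_bij J M i)

end Colim
end LC
end

noncomputable section

namespace LC
open CategoryTheory.Abelian

section General
variable {R : Type} [CommRing R] (J : Ideal R)
variable {A B C A' B' C' M : Type} [AddCommGroup A] [Module R A] [AddCommGroup B] [Module R B]
  [AddCommGroup C] [Module R C] [AddCommGroup A'] [Module R A'] [AddCommGroup B'] [Module R B']
  [AddCommGroup C'] [Module R C'] [AddCommGroup M] [Module R M]

/-- `M` is `J`-torsion. -/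
def Tors (M : Type) [AddCommGroup M] [Module R M] : Prop := ∀ w : M, ∃ k : ℕ, ∀ r ∈ J ^ k, r • w = 0

/-- `H^i(M) = 0`. -/
def Vn (i : ℕ) (M : Type) [AddCommGroup M] [Module R M] : Prop := ∀ z : H J i M, z = 0

variable {J} in
lemma Vn.retract {i : ℕ} (h : Vn J i A) (s : B →ₗ[R] A) (r : A →ₗ[R] B) (hrs : r ∘ₗ s = LinearMap.id) :
    Vn J i B := by
  intro z
  rw [← Hm_id J i z, ← hrs, Hm_comp, h (Hm J i s z), map_zero]

variable {J} in
lemma Vn.equiv {i : ℕ} (h : Vn J i A) (e : A ≃ₗ[R] B) : Vn J i B :=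
  h.retract e.symm.toLinearMap e.toLinearMap (by ext; simp)

lemma Vn_of_subsingleton {i : ℕ} [Subsingleton A] : Vn J i A := by
  intro z
  rw [← Hm_id J i z, show (LinearMap.id : A →ₗ[R] A) = 0 from Subsingleton.elim _ _, Hm_zero]

lemma Hm_sum {ι : Type} (i : ℕ) (s : Finset ι) (f : ι → A →ₗ[R] B) (z : H J i A) :
    Hm J i (∑ k ∈ s, f k) z = ∑ k ∈ s, Hm J i (f k) z := by
  classical
  induction s using Finset.induction_on with
  | empty => simp [Hm_zero]
  | insert a s ha ih => rw [Finset.sum_insert ha, Finset.sum_insert ha, Hm_add, ih]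

lemma Vn_pi {ι : Type} [Fintype ι] {i : ℕ} (h : Vn J i A) : Vn J i (ι → A) := by
  classical
  intro z
  rw [← Hm_id J i z]
  have : (LinearMap.id : (ι → A) →ₗ[R] (ι → A)) = ∑ k, LinearMap.single R (fun _ => A) k ∘ₗ LinearMap.proj k := by
    ext a b c
    simp
  rw [this, Hm_sum]
  refine Finset.sum_eq_zero fun k _ => ?_
  rw [Hm_comp, h (Hm J i _ z), map_zero]

lemma Vn_free {i : ℕ} (h : Vn J i R) [Module.Free R M] [Module.Finite R M] : Vn J i M := by
  rcases subsingleton_or_nontrivial R with hR | hR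
  · have := Module.subsingleton R M
    exact Vn_of_subsingleton J
  · exact (Vn_pi J h).equiv (Module.finBasis R M).equivFun.symm

lemma kill {i : ℕ} (z : H J i M) : ∃ k : ℕ, ∀ r ∈ J ^ k, r • z = 0 := by
  obtain ⟨k, e, rfl⟩ := io_surj J z
  refine ⟨k, fun r hr => ?_⟩
  rw [← map_smul]
  have : r • (𝟙 (Xk J k)) = 0 := by
    refine ModuleCat.hom_ext (LinearMap.ext fun x => ?_)
    obtain ⟨x, rfl⟩ := Submodule.Quotient.mk_surjective _ x
    show r • (Submodule.Quotient.mk x : R ⧸ J ^ k) = 0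
    rw [← Submodule.Quotient.mk_smul, Submodule.Quotient.mk_eq_zero]
    exact Ideal.mul_mem_right _ _ hr
  have h2 : r • e = (Ext.mk₀ (r • (𝟙 (Xk J k)))).comp e (zero_add i) := by
    simp [Ext.mk₀_smul]
  rw [h2, this, Ext.mk₀_zero, Ext.zero_comp, map_zero]

lemma le0 {X Y : ModuleCat.{0} R} (f : X ⟶ Y) : Ext.linearEquiv₀ (R := R) (Ext.mk₀ f) = f := 
  (Ext.linearEquiv₀ (R := R)).apply_symm_apply f

/-- evaluation of a degree zero class at `1` -/
def ev0 (M : ModuleCat.{0} R) (k : ℕ) : Abelian.Ext (Xk J k) M 0 →ₗ[R] M where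
  toFun e := (Ext.linearEquiv₀ (R := R) e) (Submodule.Quotient.mk 1 : R ⧸ J ^ k)
  map_add' x y := by simp
  map_smul' r x := by simp

def ev (M : Type) [AddCommGroup M] [Module R M] : H J 0 M →ₗ[R] M :=
  Module.DirectLimit.lift R ℕ _ _ (fun k => ev0 J (ModuleCat.of R M) k) (by
    intro k l h e
    obtain ⟨f, rfl⟩ := (Ext.linearEquiv₀ (R := R)).symm.surjective e
    simp [ev0, tr_apply, tk, le0])

lemma ev_io (k : ℕ) (f : Xk J k ⟶ ModuleCat.of R M) : 
    ev J M (io J 0 _ k (Ext.mk₀ f)) = f (Submodule.Quotient.mk 1 : R ⧸ J ^ k) := by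
  have : ev J M (io J 0 _ k (Ext.mk₀ f)) = ev0 J (ModuleCat.of R M) k (Ext.mk₀ f) := 
    Module.DirectLimit.lift_of _ _ _
  rw [this]
  simp [ev0, le0]

lemma io0_surj (z : H J 0 M) : ∃ k f, z = io J 0 _ k (Ext.mk₀ f) := by
  obtain ⟨k, e, rfl⟩ := io_surj J z
  obtain ⟨f, rfl⟩ := (Ext.linearEquiv₀ (R := R)).symm.surjective e
  exact ⟨k, f, by simp⟩

lemma ev_nat (f : A →ₗ[R] B) (z : H J 0 A) : ev J B (Hm J 0 f z) = f (ev J A z) := by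
  obtain ⟨k, g, rfl⟩ := io0_surj J z
  rw [Hm_io, ev_io, Ext.mk₀_comp_mk₀, ev_io]
  rfl

lemma ev_inj : Function.Injective (ev J M) := by
  rw [injective_iff_map_eq_zero]
  intro z hz
  obtain ⟨k, g, rfl⟩ := io0_surj J z
  rw [ev_io] at hz
  have : g = 0 := by
    refine ModuleCat.hom_ext (LinearMap.ext fun x => ?_)
    obtain ⟨x, rfl⟩ := Submodule.Quotient.mk_surjective _ x
    have e : (Submodule.Quotient.mk x : R ⧸ J ^ k) = x • (Submodule.Quotient.mk 1 : R ⧸ J ^ k) := by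
      rw [← Submodule.Quotient.mk_smul, smul_eq_mul, mul_one]
    rw [e, map_smul]
    refine (congrArg (x • ·) hz).trans (smul_zero _)
  rw [this, Ext.mk₀_zero, map_zero]

lemma ev_range (m : M) (k : ℕ) (hk : ∀ r ∈ J ^ k, r • m = 0) : ∃ z, ev J M z = m := by
  let f : Xk J k ⟶ ModuleCat.of R M := ModuleCat.ofHom ((J ^ k).liftQ (LinearMap.toSpanSingleton R M m) (by
    intro r hr; simpa using hk r hr))
  refine ⟨io J 0 _ k (Ext.mk₀ f), ?_⟩
  rw [ev_io]
  show (1 : R) • m = m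
  simp

variable {J} in
/-- `H^0(T) ≅ T` for torsion `T`. -/
def evE (h : Tors J M) : H J 0 M ≃ₗ[R] M := LinearEquiv.ofBijective (ev J M) ⟨ev_inj J, fun m => by
  obtain ⟨k, hk⟩ := h m
  exact ev_range J m k hk⟩

lemma H0_surj (hA : Tors J A) (f : A →ₗ[R] B) (hf : Function.Surjective f) : 
    Function.Surjective (Hm J 0 f) := by
  intro z
  obtain ⟨a, ha⟩ := hf (ev J B z)
  obtain ⟨y, rfl⟩ := (evE hA).surjective a
  refine ⟨y, ev_inj J ?_⟩
  rw [ev_nat, ← ha]; rfl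

lemma H0_inj (f : A →ₗ[R] B) (hf : Function.Injective f) : Function.Injective (Hm J 0 f) := by
  intro x y h
  have := congrArg (ev J B) h
  rw [ev_nat, ev_nat] at this
  exact ev_inj J (hf this)

lemma Vn_zero (x : R) (hx : x ∈ J) (h : ∀ m : M, x • m = 0 → m = 0) : Vn J 0 M := by
  intro z
  apply ev_inj J
  rw [map_zero]
  obtain ⟨k, hk⟩ := kill J z
  have : x ^ k • ev J M z = 0 := by rw [← map_smul, hk _ (Ideal.pow_mem_pow hx k), map_zero]
  have key : ∀ k (m : M), x ^ k • m = 0 → m = 0 := by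
    intro k
    induction k with
    | zero => intro m hm; simpa using hm
    | succ k ih => intro m hm; rw [pow_succ', mul_smul] at hm; exact ih _ (h _ hm)
  exact key _ _ this

lemma Vn_step {i : ℕ} (x : R) (hx : x ∈ J) {g : M →ₗ[R] C} 
    (hs : SES (LinearMap.lsmul R M x) g) (h : Vn J i C) : Vn J (i+1) M := by
  have inj : ∀ z : H J (i+1) M, x • z = 0 → z = 0 := by
    intro z hz
    have h1 : Hm J (i+1) (LinearMap.lsmul R M x) z = 0 := by
      have : LinearMap.lsmul R M x = x • LinearMap.id := by ext; simp
      rw [this, Hm_smul, Hm_id, hz]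
    obtain ⟨y, rfl⟩ := (exact₁ J hs i z).1 h1
    rw [h y, map_zero]
  intro z
  obtain ⟨k, hk⟩ := kill J z
  have key : ∀ k (m : H J (i+1) M), x ^ k • m = 0 → m = 0 := by
    intro k
    induction k with
    | zero => intro m hm; simpa using hm
    | succ k ih => intro m hm; rw [pow_succ', mul_smul] at hm; exact ih _ (inj _ hm)
  exact key k z (hk _ (Ideal.pow_mem_pow hx k))

section les
variable {f : A →ₗ[R] B} {g : B →ₗ[R] C} (h : SES f g)
include h
variable {J}

lemma Vn_left {i : ℕ} (hC : Vn J i C) (hB : Vn J (i+1) B) : Vn J (i+1) A := by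
  intro z
  obtain ⟨y, rfl⟩ := (exact₁ J h i z).1 (hB _)
  rw [hC y, map_zero]

lemma Vn_mid {i : ℕ} (hA : Vn J i A) (hC : Vn J i C) : Vn J i B := by
  intro z
  obtain ⟨y, rfl⟩ := (exact₂ J h i z).1 (hC _)
  rw [hA y, map_zero]

lemma Vn_right {i : ℕ} (hB : Vn J i B) (hA : Vn J (i+1) A) : Vn J i C := by
  intro z
  obtain ⟨y, rfl⟩ := (exact₃ J h i z).1 (hA _)
  rw [hB y, map_zero]

lemma δ_inj {i : ℕ} (hB : Vn J i B) : Function.Injective (δ J h i) := by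
  rw [injective_iff_map_eq_zero]
  intro z hz
  obtain ⟨y, rfl⟩ := (exact₃ J h i z).1 hz
  rw [hB y, map_zero]

lemma δ_surj {i : ℕ} (hB : Vn J (i+1) B) : Function.Surjective (δ J h i) := by
  intro z
  exact (exact₁ J h i z).1 (hB _)

lemma Hf_inj {i : ℕ} (hC : Vn J i C) : Function.Injective (Hm J (i+1) f) := by
  rw [injective_iff_map_eq_zero]
  intro z hz
  obtain ⟨y, rfl⟩ := (exact₁ J h i z).1 hz
  rw [hC y, map_zero]

lemma Hf_surj {i : ℕ} (hC : Vn J i C) : Function.Surjective (Hm J i f) := by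
  intro z
  exact (exact₂ J h i z).1 (hC _)

lemma Hg_inj {i : ℕ} (hA : Vn J i A) : Function.Injective (Hm J i g) := by
  rw [injective_iff_map_eq_zero]
  intro z hz
  obtain ⟨y, rfl⟩ := (exact₂ J h i z).1 hz
  rw [hA y, map_zero]

lemma Hg_surj {i : ℕ} (hA : Vn J (i+1) A) : Function.Surjective (Hm J i g) := by
  intro z
  exact (exact₃ J h i z).1 (hA _)

/-- ladder lemma -/
lemma ladder {f' : A' →ₗ[R] B'} {g' : B' →ₗ[R] C'} (h' : SES f' g')
    (a : A →ₗ[R] A') (b : B →ₗ[R] B') (c : C →ₗ[R] C')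
    (hab : f' ∘ₗ a = b ∘ₗ f) (hbc : g' ∘ₗ b = c ∘ₗ g) {i : ℕ} 
    (hc : Function.Surjective (Hm J i c)) (hB : Vn J (i+1) B') : Function.Surjective (Hm J (i+1) a) := by
  intro z
  obtain ⟨y, rfl⟩ := δ_surj h' hB z
  obtain ⟨y, rfl⟩ := hc y
  exact ⟨δ J h i y, (δ_nat J h h' a b c hab hbc i y).symm⟩
end les

lemma SES_ker (f : A →ₗ[R] B) : SES (LinearMap.ker f).subtype f.rangeRestrict where
  inj := Subtype.val_injective
  ex := by
    intro y
    simp [Subtype.ext_iff]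
  surj := f.surjective_rangeRestrict

lemma SES_ker' (f : A →ₗ[R] B) (hf : Function.Surjective f) : SES (LinearMap.ker f).subtype f where
  inj := Subtype.val_injective
  ex := by
    intro y
    simp
  surj := hf

lemma SES_quot (p : Submodule R A) : SES p.subtype p.mkQ where
  inj := Subtype.val_injective
  ex := by
    intro y
    simp
  surj := p.mkQ_surjective

variable {J} in
lemma Tors.mono {w : Type} [AddCommGroup w] [Module R w] (h : Tors J A) (f : w →ₗ[R] A) (hf : Function.Injective f) : Tors J w := by
  intro x
  obtain ⟨k, hk⟩ := h (f x)
  exact ⟨k, fun r hr => hf (by rw [map_smul, hk r hr, map_zero])⟩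

variable {J} in
lemma Tors.quot (h : Tors J A) (f : A →ₗ[R] B) (hf : Function.Surjective f) : Tors J B := by
  intro x
  obtain ⟨x, rfl⟩ := hf x
  obtain ⟨k, hk⟩ := h x
  exact ⟨k, fun r hr => (by rw [← map_smul, hk r hr, map_zero])⟩

/-- `Γ_J(M)`. -/
def Gam (M : Type) [AddCommGroup M] [Module R M] : Submodule R M where
  carrier := {w | ∃ k : ℕ, ∀ r ∈ J ^ k, r • w = 0}
  zero_mem' := ⟨0, by simp⟩
  add_mem' := by
    rintro a b ⟨k, hk⟩ ⟨l, hl⟩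
    refine ⟨max k l, fun r hr => ?_⟩
    rw [smul_add, hk r (Ideal.pow_le_pow_right (le_max_left _ _) hr), hl r (Ideal.pow_le_pow_right (le_max_right _ _) hr), add_zero]
  smul_mem' := by
    rintro c a ⟨k, hk⟩
    refine ⟨k, fun r hr => ?_⟩
    rw [smul_comm, hk r hr, smul_zero]

lemma Gam_tors : Tors J (Gam J M) := by
  rintro ⟨w, k, hk⟩
  exact ⟨k, fun r hr => Subtype.ext (hk r hr)⟩

lemma unif (hT : Tors J M) (p : Submodule R M) (hp : p.FG) : ∃ k : ℕ, ∀ r ∈ J ^ k, ∀ w ∈ p, r • w = 0 := by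
  obtain ⟨s, rfl⟩ := hp
  choose k hk using hT
  refine ⟨s.sup k, fun r hr w hw => ?_⟩
  induction hw using Submodule.span_induction with
  | mem x hx => exact hk x r (Ideal.pow_le_pow_right (Finset.le_sup hx) hr)
  | zero => simp
  | add x y _ _ hx hy => rw [smul_add, hx, hy, add_zero]
  | smul a x _ hx => rw [smul_comm, hx, smul_zero]

end General

section Noeth
variable {R : Type} [CommRing R] [IsNoetherianRing R] (J : Ideal R)
variable {A B C M : Type} [AddCommGroup A] [Module R A] [AddCommGroup B] [Module R B]
  [AddCommGroup C] [Module R C] [AddCommGroup M] [Module R M]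

lemma tors_of (M : Type) [AddCommGroup M] [Module R M] (c e : ℕ) (h : ∀ w : M, ∀ g ∈ J ^ c, g ^ e • w = 0) : Tors J M := by
  intro w
  let I := (Submodule.span R {w}).annihilator
  have hr : J ^ c ≤ I.radical := by
    intro g hg
    refine ⟨e, ?_⟩
    rw [Submodule.mem_annihilator_span_singleton]
    exact h w g hg
  obtain ⟨k, hk⟩ := Ideal.exists_pow_le_of_le_radical_of_fg hr (IsNoetherian.noetherian _)
  refine ⟨c * k, fun r hr => ?_⟩
  rw [pow_mul] at hr
  exact (Submodule.mem_annihilator_span_singleton _ _).1 (hk hr)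

lemma Gam_inj [Module.Injective R M] : Module.Injective R (Gam J M) := by
  apply Module.Baer.injective
  intro I g
  have hfg : (LinearMap.range g).FG := by
    rw [LinearMap.range_eq_map]
    exact Submodule.FG.map _ (Module.Finite.fg_top)
  obtain ⟨k, hk⟩ := unif J (Gam_tors J) (LinearMap.range g) hfg
  obtain ⟨m, hm⟩ := Ideal.exists_pow_inf_eq_pow_smul J I
  have hm' := hm (m + k) (Nat.le_add_right _ _)
  rw [Nat.add_sub_cancel_left] at hm'
  -- `g` kills `I ∩ J^(m+k)`
  have hg : ∀ (x : R) (hx : x ∈ I), x ∈ J ^ (m + k) → g ⟨x, hx⟩ = 0 := by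
    intro x hx hxJ
    have h1 : x ∈ J ^ k • I := by
      have : x ∈ J ^ (m + k) • (⊤ : Submodule R R) ⊓ I := ⟨by simpa using hxJ, hx⟩
      rw [hm'] at this
      exact Submodule.smul_mono le_rfl inf_le_right this
    suffices ∃ (hx : x ∈ I), g ⟨x, hx⟩ = 0 from this.2
    refine Submodule.smul_induction_on h1 ?_ ?_
    · intro r hr y hy
      refine ⟨I.mul_mem_left r hy, ?_⟩
      have : (⟨r • y, I.mul_mem_left r hy⟩ : I) = r • ⟨y, hy⟩ := rfl
      rw [this, map_smul]
      exact hk r hr _ ⟨_, rfl⟩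
    · rintro y z ⟨hyI, hy⟩ ⟨hzI, hz⟩
      refine ⟨I.add_mem hyI hzI, ?_⟩
      have : (⟨y + z, I.add_mem hyI hzI⟩ : I) = ⟨y, hyI⟩ + ⟨z, hzI⟩ := rfl
      rw [this, map_add, hy, hz, add_zero]
  let q : Submodule R I := Submodule.comap (Submodule.subtype I) (J ^ (m + k))
  let f : (I ⧸ q) →ₗ[R] (R ⧸ J ^ (m + k)) := Submodule.mapQ q (J ^ (m + k)) (Submodule.subtype I) le_rfl
  have hf : Function.Injective f := by
    rw [← LinearMap.ker_eq_bot, Submodule.ker_mapQ]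
    simp [q]
  let g' : (I ⧸ q) →ₗ[R] M := q.liftQ ((Gam J M).subtype ∘ₗ g) (by
    rintro ⟨x, hx⟩ hxq
    rw [LinearMap.mem_ker, LinearMap.comp_apply, hg x hx hxq, map_zero])
  obtain ⟨h, hh⟩ := Module.Injective.out f hf g'
  refine ⟨LinearMap.codRestrict (Gam J M) (h ∘ₗ (J ^ (m + k)).mkQ) ?_, ?_⟩
  · intro x
    refine ⟨m + k, fun r hr => ?_⟩
    rw [← map_smul]
    have : (J ^ (m+k)).mkQ (r • x) = 0 := by
      rw [Submodule.mkQ_apply, Submodule.Quotient.mk_eq_zero]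
      exact Ideal.mul_mem_right _ _ hr
    rw [LinearMap.comp_apply, this, map_zero]
  · intro x hx
    apply Subtype.ext
    exact hh (Submodule.Quotient.mk ⟨x, hx⟩)

lemma Vn_tors (i : ℕ) : ∀ (T : Type) [AddCommGroup T] [Module R T], Tors J T → Vn J (i+1) T := by
  have key : ∀ (T : Type) [AddCommGroup T] [Module R T], Tors J T → ∃ (E : Type) (_ : AddCommGroup E) (_ : Module R E) (f : T →ₗ[R] E), Tors J E ∧ Function.Injective f ∧ ∀ i, Vn J (i+1) E := by
    intro T _ _ hT
    let E0 : ModuleCat.{0} R := Injective.under (ModuleCat.of R T)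
    have hE0' : Injective (ModuleCat.of R E0) := inferInstanceAs (Injective (Injective.under (ModuleCat.of R T)))
    have hE0 : Module.Injective R E0 := Module.injective_module_of_injective_object R E0
    let ι : T →ₗ[R] E0 := (Injective.ι (ModuleCat.of R T)).hom
    have hι : Function.Injective ι := (ModuleCat.mono_iff_injective (Injective.ι (ModuleCat.of R T))).1 inferInstance
    refine ⟨Gam J E0, inferInstance, inferInstance, LinearMap.codRestrict _ ι ?_, Gam_tors J, ?_, ?_⟩
    · intro x
      obtain ⟨k, hk⟩ := hT x
      exact ⟨k, fun r hr => by rw [← map_smul, hk r hr, map_zero]⟩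
    · intro x y h
      exact hι (congrArg Subtype.val h)
    · intro i z
      have : Module.Injective R (Gam J E0) := Gam_inj J
      have : Injective (ModuleCat.of R (Gam J E0)) := Module.injective_object_of_injective_module R _
      obtain ⟨k, e, rfl⟩ := io_surj J z
      rw [Ext.eq_zero_of_injective e, map_zero]
  induction i with
  | zero =>
    intro T _ _ hT
    obtain ⟨E, _, _, f, hE, hf, hv⟩ := key T hT
    have hs : SES f (LinearMap.range f).mkQ := 
      ⟨hf, by intro y; simp, Submodule.mkQ_surjective _⟩
    intro z
    obtain ⟨y, rfl⟩ := δ_surj hs (hv 0) z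
    obtain ⟨x, rfl⟩ := H0_surj J hE (LinearMap.range f).mkQ (Submodule.mkQ_surjective _) y
    exact (exact₃ J hs 0 _).2 ⟨x, rfl⟩
  | succ i ih =>
    intro T _ _ hT
    obtain ⟨E, _, _, f, hE, hf, hv⟩ := key T hT
    have hs : SES f (LinearMap.range f).mkQ := 
      ⟨hf, by intro y; simp, Submodule.mkQ_surjective _⟩
    exact Vn_left hs (ih _ (hE.quot _ (Submodule.mkQ_surjective _))) (hv _)

/-- isogeny lemma -/
lemma isog (f : A →ₗ[R] B) (h1 : Tors J (LinearMap.ker f)) (h2 : Tors J (B ⧸ LinearMap.range f)) (i : ℕ) :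
    Function.Bijective (Hm J (i+2) f) := by
  have e : f = (LinearMap.range f).subtype ∘ₗ f.rangeRestrict := rfl
  have e2 : (Hm J (i+2) f : H J (i+2) A → H J (i+2) B) = Hm J (i+2) (LinearMap.range f).subtype ∘ Hm J (i+2) f.rangeRestrict := by
    funext z
    exact Hm_comp J (i+2) (LinearMap.range f).subtype f.rangeRestrict z
  rw [e2]
  have s1 := SES_ker f
  have s2 := SES_quot (LinearMap.range f)
  exact Function.Bijective.comp ⟨Hf_inj s2 (Vn_tors J i _ h2), Hf_surj s2 (Vn_tors J (i+1) _ h2)⟩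
    ⟨Hg_inj s1 (Vn_tors J (i+1) _ h1), Hg_surj s1 (Vn_tors J (i+2) _ h1)⟩

end Noeth
end LC
end

noncomputable section

namespace LC
section poly
open MvPolynomial
variable (F : Type) [Field F] (n : ℕ)

/-- The ideal of the first `r` variables. -/
def Ir (r : ℕ) : Ideal (MvPolynomial (Fin (n+1)) F) := Ideal.span (X '' {i : Fin (n+1) | i.val < r})

lemma Ir_mono (r : ℕ) : Ir F n r ≤ Ir F n (r+1) := 
  Ideal.span_mono (Set.image_mono fun i (hi : i.val < r) => Nat.lt_succ_of_lt hi)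

lemma Ir_reg (r : ℕ) (hr : r < n+1) (p : MvPolynomial (Fin (n+1)) F) (h : X ⟨r, hr⟩ * p ∈ Ir F n r) : p ∈ Ir F n r := by
  unfold Ir at *
  rw [mem_ideal_span_X_image] at *
  intro m hm
  obtain ⟨i, hi, hmi⟩ := h (Finsupp.single ⟨r, hr⟩ 1 + m) (by
    rw [mem_support_iff, coeff_X_mul]; exact mem_support_iff.1 hm)
  refine ⟨i, hi, ?_⟩
  have : (⟨r, hr⟩ : Fin (n+1)) ≠ i := by
    rintro rfl
    exact lt_irrefl r hi
  simpa [Finsupp.single_apply, this] using hmi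

lemma Ir_succ (r : ℕ) (hr : r < n+1) (p : MvPolynomial (Fin (n+1)) F) (h : p ∈ Ir F n (r+1)) : 
    ∃ b, p - X ⟨r, hr⟩ * b ∈ Ir F n r := by
  have : Ir F n (r+1) = Ideal.span {X ⟨r, hr⟩} ⊔ Ir F n r := by
    unfold Ir
    rw [← Ideal.span_union]
    congr 1
    have : {i : Fin (n+1) | i.val < r + 1} = insert ⟨r, hr⟩ {i : Fin (n+1) | i.val < r} := by
      ext i
      simp [Fin.ext_iff]; lia
    rw [this, Set.image_insert_eq]
    rfl
  rw [this, Submodule.mem_sup] at h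
  obtain ⟨y, hy, z, hz, rfl⟩ := h
  obtain ⟨b, rfl⟩ := Ideal.mem_span_singleton'.1 hy
  refine ⟨b, ?_⟩
  rw [mul_comm b]
  simpa using hz

lemma Ir_ses (r : ℕ) (hr : r < n+1) : 
    SES (LinearMap.lsmul (MvPolynomial (Fin (n+1)) F) (MvPolynomial (Fin (n+1)) F ⧸ Ir F n r) (X ⟨r, hr⟩))
      (Submodule.mapQ (Ir F n r) (Ir F n (r+1)) LinearMap.id (Ir_mono F n r)) where
  inj := by
    rw [injective_iff_map_eq_zero]
    intro a ha
    obtain ⟨a, rfl⟩ := Submodule.Quotient.mk_surjective _ a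
    rw [LinearMap.lsmul_apply, ← Submodule.Quotient.mk_smul, Submodule.Quotient.mk_eq_zero] at ha
    rw [Submodule.Quotient.mk_eq_zero]
    exact Ir_reg F n r hr a ha
  ex := by
    intro a
    obtain ⟨a, rfl⟩ := Submodule.Quotient.mk_surjective _ a
    rw [Submodule.mapQ_apply, LinearMap.id_apply, Submodule.Quotient.mk_eq_zero]
    constructor
    · intro h
      obtain ⟨b, hb⟩ := Ir_succ F n r hr a h
      refine ⟨Submodule.Quotient.mk b, ?_⟩
      rw [LinearMap.lsmul_apply, ← Submodule.Quotient.mk_smul, eq_comm, Submodule.Quotient.eq]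
      exact hb
    · rintro ⟨b, hb⟩
      obtain ⟨b, rfl⟩ := Submodule.Quotient.mk_surjective _ b
      rw [LinearMap.lsmul_apply, ← Submodule.Quotient.mk_smul, eq_comm, Submodule.Quotient.eq] at hb
      have h1 := Ir_mono F n r hb
      have h3 : (X ⟨r, hr⟩ : MvPolynomial (Fin (n+1)) F) ∈ Ir F n (r+1) :=
        Ideal.subset_span ⟨⟨r, hr⟩, by simp, rfl⟩
      have h2 : (X ⟨r, hr⟩ : MvPolynomial (Fin (n+1)) F) • b ∈ Ir F n (r+1) := Ideal.mul_mem_right _ _ h3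
      simpa using add_mem h1 h2
  surj := by
    intro a
    obtain ⟨a, rfl⟩ := Submodule.Quotient.mk_surjective _ a
    exact ⟨Submodule.Quotient.mk a, rfl⟩

lemma Vn_Ir (j : ℕ) : ∀ r, j + r < n + 1 → 
    Vn (Ideal.span (Set.range (X : Fin (n+1) → MvPolynomial (Fin (n+1)) F))) j (MvPolynomial (Fin (n+1)) F ⧸ Ir F n r) := by
  induction j with
  | zero =>
    intro r hr
    refine Vn_zero _ (X ⟨r, by lia⟩) (Ideal.subset_span ⟨_, rfl⟩) fun m hm => ?_
    exact (injective_iff_map_eq_zero _).1 (Ir_ses F n r (by lia)).inj m hm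
  | succ j ih =>
    intro r hr
    exact Vn_step _ (X ⟨r, by lia⟩) (Ideal.subset_span ⟨_, rfl⟩) (Ir_ses F n r (by lia)) (ih (r+1) (by lia))

lemma Vn_poly (j : ℕ) (hj : j < n + 1) : 
    Vn (Ideal.span (Set.range (X : Fin (n+1) → MvPolynomial (Fin (n+1)) F))) j (MvPolynomial (Fin (n+1)) F) := by
  have h := Vn_Ir F n j 0 (by lia)
  have h0 : Ir F n 0 = ⊥ := by simp [Ir]
  exact h.equiv (Submodule.quotEquivOfEqBot _ h0)

end poly
end LC
end

noncomputable section
set_option linter.unusedSectionVars false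

namespace LC

/-- The first steps of a free resolution of a cyclic torsion module. -/
structure Dat {R : Type} [CommRing R] (J : Ideal R) (L1 L2 N : Type) [AddCommGroup L1] [Module R L1]
    [AddCommGroup L2] [Module R L2] [AddCommGroup N] [Module R N] where
  f : L1 →ₗ[R] R
  d : L2 →ₗ[R] L1
  p : R →ₗ[R] N
  ex1 : ∀ x, f x = 0 ↔ ∃ y, d y = x
  ex0 : ∀ r, p r = 0 ↔ ∃ x, f x = r
  psurj : Function.Surjective p
  c : ℕ
  hc : ∀ g ∈ J ^ c, ∃ l, f l = g
  vn : ∀ j ≤ 4, Vn J j R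

section SESl
variable {R : Type} [CommRing R]
variable {A B C F : Type} [AddCommGroup A] [Module R A] [AddCommGroup B] [Module R B]
  [AddCommGroup C] [Module R C] [AddCommGroup F] [Module R F]

lemma SES.lT (F : Type) [AddCommGroup F] [Module R F] [Module.Flat R F] {f : A →ₗ[R] B} {g : B →ₗ[R] C} 
    (h : SES f g) : SES (f.lTensor F) (g.lTensor F) where
  inj := Module.Flat.lTensor_preserves_injective_linearMap f h.inj
  ex := lTensor_exact F h.ex h.surj
  surj := LinearMap.lTensor_surjective F h.surj
end SESl

namespace Dat
variable {R : Type} [CommRing R] [IsNoetherianRing R] {J : Ideal R} {L1 L2 N : Type} [AddCommGroup L1] [Module R L1]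
    [AddCommGroup L2] [Module R L2] [AddCommGroup N] [Module R N] 
    (D : Dat J L1 L2 N)
include D

abbrev P : Submodule R L2 := LinearMap.ker D.d
abbrev Z1 : Submodule R L1 := LinearMap.ker D.f
abbrev Z0 : Submodule R R := LinearMap.range D.f

lemma fd (x : L2) : D.f (D.d x) = 0 := (D.ex1 _).2 ⟨x, rfl⟩

def dZ : L2 →ₗ[R] D.Z1 := D.d.codRestrict D.Z1 (fun x => D.fd x)
def fZ : L1 →ₗ[R] D.Z0 := D.f.rangeRestrict

@[simp] lemma dZ_coe (x : L2) : (D.dZ x : L1) = D.d x := rfl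
@[simp] lemma fZ_coe (x : L1) : (D.fZ x : R) = D.f x := rfl

lemma dZ_surj : Function.Surjective D.dZ := by
  rintro ⟨x, hx⟩
  obtain ⟨y, rfl⟩ := (D.ex1 x).1 hx
  exact ⟨y, rfl⟩

lemma fZ_surj : Function.Surjective D.fZ := D.f.surjective_rangeRestrict

lemma ses2 : SES D.P.subtype D.dZ where
  inj := Subtype.val_injective
  ex := by intro y; simp [Subtype.ext_iff]
  surj := D.dZ_surj

lemma ses1 : SES D.Z1.subtype D.fZ where
  inj := Subtype.val_injective
  ex := by intro y; simp [Subtype.ext_iff]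
  surj := D.fZ_surj

lemma ses0 : SES D.Z0.subtype D.p where
  inj := Subtype.val_injective
  ex := by intro y; simp [D.ex0]
  surj := D.psurj

lemma killN (g : R) (hg : g ∈ J ^ D.c) (x : N) : g • x = 0 := by
  obtain ⟨r, rfl⟩ := D.psurj x
  obtain ⟨l, rfl⟩ := D.hc g hg
  rw [← map_smul, D.ex0]
  exact ⟨r • l, by simp [mul_comm]⟩

lemma f_killN (l : L1) (x : N) : D.f l • x = 0 := by
  obtain ⟨r, rfl⟩ := D.psurj x
  rw [← map_smul, D.ex0]
  exact ⟨r • l, by simp [mul_comm]⟩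

lemma torsFN (F : Type) [AddCommGroup F] [Module R F] : Tors J (F ⊗[R] N) := by
  intro w
  refine ⟨D.c, fun g hg => ?_⟩
  induction w using TensorProduct.induction_on with
  | zero => simp
  | tmul x y => rw [← TensorProduct.tmul_smul, D.killN g hg, TensorProduct.tmul_zero]
  | add x y hx hy => rw [smul_add, hx, hy, add_zero]

section homot
variable [Module.Free R L1] (g : R) (hg : g ∈ J ^ D.c)

/-- homotopy data for multiplication by `g` -/
lemma homot (hg : g ∈ J ^ D.c) : ∃ (y : L1) (s : L1 →ₗ[R] L2) (θ : L2 →ₗ[R] D.P), 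
    D.f y = g ∧ (∀ a, D.d (s a) = g • a - D.f a • y) ∧ (∀ x, (θ x : L2) = g • x - s (D.d x)) ∧ 
    (∀ x : D.P, θ x = g • x) := by
  obtain ⟨y, hy⟩ := D.hc g hg
  let t : L1 →ₗ[R] D.Z1 := (g • LinearMap.id - (LinearMap.toSpanSingleton R L1 y) ∘ₗ D.f).codRestrict D.Z1 (by
    intro a
    simp [hy, mul_comm])
  obtain ⟨s, hs⟩ := Module.projective_lifting_property D.dZ t D.dZ_surj
  have hs' : ∀ a, D.d (s a) = g • a - D.f a • y := by
    intro a
    have := congrArg Subtype.val (LinearMap.congr_fun hs a)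
    simpa [t] using this
  have hm : ∀ x, (g • LinearMap.id - s ∘ₗ D.d : L2 →ₗ[R] L2) x ∈ D.P := by
    intro x
    simp [hs', D.fd]
  refine ⟨y, s, (g • LinearMap.id - s ∘ₗ D.d).codRestrict D.P hm, hy, hs', ?_, ?_⟩
  · intro x; simp
  · rintro ⟨x, hx⟩
    apply Subtype.ext
    have : D.d x = 0 := hx
    simp [this]

lemma tor_kill [Module.Free R L2] (hg : g ∈ J ^ D.c) {X Y : Type} [AddCommGroup X] [Module R X] [AddCommGroup Y] [Module R Y] (φ : X →ₗ[R] Y)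
    (hφ : Function.Injective φ) (w : X ⊗[R] D.P) (hw : φ.rTensor D.P w = 0) : g • w = 0 := by
  obtain ⟨y, s, θ, -, -, -, hθ⟩ := D.homot g hg
  have e : g • w = θ.lTensor X (D.P.subtype.lTensor X w) := by
    rw [← LinearMap.comp_apply, ← LinearMap.lTensor_comp]
    have : θ ∘ₗ D.P.subtype = g • LinearMap.id := by ext x; simp [hθ]
    rw [this, LinearMap.lTensor_smul, LinearMap.lTensor_id]; rfl
  have h0 : D.P.subtype.lTensor X w = 0 := by
    apply Module.Flat.rTensor_preserves_injective_linearMap (M := L2) φ hφ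
    rw [map_zero, ← LinearMap.comp_apply, LinearMap.rTensor_comp_lTensor, ← LinearMap.lTensor_comp_rTensor, LinearMap.comp_apply, hw, map_zero]
  rw [e, h0, map_zero]

end homot

section chain
variable (F : Type) [AddCommGroup F] [Module R F] [Module.Free R F] [Module.Finite R F] 
variable [Module.Free R L1] [Module.Finite R L1] [Module.Free R L2] [Module.Finite R L2]

lemma vf (j : ℕ) (hj : j ≤ 4) : Vn J j F := Vn_free J (D.vn j hj)

lemma vZ0_0 : Vn J 0 (F ⊗[R] D.Z0) := by
  intro z
  apply H0_inj J _ (D.ses0.lT F).inj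
  rw [map_zero]
  exact D.vf _ 0 (by lia) _

lemma vZ0 (i : ℕ) (hi : i + 2 ≤ 4) : Vn J (i+2) (F ⊗[R] D.Z0) :=
  Vn_left (D.ses0.lT F) (Vn_tors J i _ (D.torsFN F)) (D.vf _ _ hi)

lemma vZ1_0 : Vn J 0 (F ⊗[R] D.Z1) := by
  intro z
  apply H0_inj J _ (D.ses1.lT F).inj
  rw [map_zero]
  exact D.vf _ 0 (by lia) _

lemma vZ1_1 : Vn J 1 (F ⊗[R] D.Z1) := Vn_left (D.ses1.lT F) (D.vZ0_0 F) (D.vf _ _ (by lia))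
lemma vZ1_3 : Vn J 3 (F ⊗[R] D.Z1) := Vn_left (D.ses1.lT F) (D.vZ0 F 0 (by lia)) (D.vf _ _ (by lia))
lemma vP_2 : Vn J 2 (F ⊗[R] D.P) := Vn_left (D.ses2.lT F) (D.vZ1_1 F) (D.vf _ _ (by lia))
lemma vP_4 : Vn J 4 (F ⊗[R] D.P) := Vn_left (D.ses2.lT F) (D.vZ1_3 F) (D.vf _ _ (by lia))

/-- `F ⊗ N ≅ H^3(F ⊗ P)` -/
def σ : F ⊗[R] N →ₗ[R] H J 3 (F ⊗[R] D.P) := 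
  δ J (D.ses2.lT F) 2 ∘ₗ δ J (D.ses1.lT F) 1 ∘ₗ δ J (D.ses0.lT F) 0 ∘ₗ (evE (D.torsFN F)).symm.toLinearMap

lemma σ_bij : Function.Bijective (D.σ F) := by
  have h2 : Function.Bijective (δ J (D.ses2.lT F) 2) := ⟨δ_inj _ (D.vf _ _ (by lia)), δ_surj _ (D.vf _ _ (by lia))⟩
  have h1 : Function.Bijective (δ J (D.ses1.lT F) 1) := ⟨δ_inj _ (D.vf _ _ (by lia)), δ_surj _ (D.vf _ _ (by lia))⟩
  have h0 : Function.Bijective (δ J (D.ses0.lT F) 0) := ⟨δ_inj _ (D.vf _ _ (by lia)), δ_surj _ (D.vf _ _ (by lia))⟩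
  exact h2.comp (h1.comp (h0.comp (evE (D.torsFN F)).symm.bijective))

end chain

lemma σ_nat (F F' : Type) [AddCommGroup F] [Module R F] [Module.Free R F] [Module.Finite R F]
    [AddCommGroup F'] [Module R F'] [Module.Free R F'] [Module.Finite R F'] (φ : F →ₗ[R] F') (x : F ⊗[R] N) :
    Hm J 3 (φ.rTensor D.P) (D.σ F x) = D.σ F' (φ.rTensor N x) := by
  obtain ⟨x, rfl⟩ := (evE (D.torsFN F)).surjective x
  have e : φ.rTensor N (evE (D.torsFN F) x) = evE (D.torsFN F') (Hm J 0 (φ.rTensor N) x) := 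
    (ev_nat J (φ.rTensor N) x).symm
  rw [e]
  simp only [σ, LinearMap.comp_apply, LinearEquiv.coe_coe, LinearEquiv.symm_apply_apply]
  rw [δ_nat J (D.ses0.lT F) (D.ses0.lT F') (φ.rTensor _) (φ.rTensor _) (φ.rTensor _) (by
      rw [LinearMap.lTensor_comp_rTensor, LinearMap.rTensor_comp_lTensor]) (by 
      rw [LinearMap.lTensor_comp_rTensor, LinearMap.rTensor_comp_lTensor]),
    δ_nat J (D.ses1.lT F) (D.ses1.lT F') (φ.rTensor _) (φ.rTensor _) (φ.rTensor _) (by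
      rw [LinearMap.lTensor_comp_rTensor, LinearMap.rTensor_comp_lTensor]) (by 
      rw [LinearMap.lTensor_comp_rTensor, LinearMap.rTensor_comp_lTensor]),
    δ_nat J (D.ses2.lT F) (D.ses2.lT F') (φ.rTensor _) (φ.rTensor _) (φ.rTensor _) (by
      rw [LinearMap.lTensor_comp_rTensor, LinearMap.rTensor_comp_lTensor]) (by 
      rw [LinearMap.lTensor_comp_rTensor, LinearMap.rTensor_comp_lTensor])]

end Dat
end LC
end

noncomputable section
set_option linter.unusedSectionVars false

namespace LC

section
variable {R : Type} [CommRing R] [IsNoetherianRing R] (J : Ideal R)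
variable {A B : Type} [AddCommGroup A] [Module R A] [AddCommGroup B] [Module R B]

/-- isogeny lemma, elementwise -/
lemma isog' (f : A →ₗ[R] B) (c e : ℕ) (h1 : ∀ w, f w = 0 → ∀ g ∈ J ^ c, g ^ e • w = 0)
    (h2 : ∀ w, ∀ g ∈ J ^ c, ∃ a, f a = g ^ e • w) (i : ℕ) :
    Function.Bijective (Hm J (i+2) f) := by
  refine isog J f (tors_of J _ c e ?_) (tors_of J _ c e ?_) i
  · rintro ⟨w, hw⟩ g hg
    exact Subtype.ext (h1 w hw g hg)
  · intro w g hg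
    obtain ⟨w, rfl⟩ := Submodule.Quotient.mk_surjective _ w
    rw [← Submodule.Quotient.mk_smul, Submodule.Quotient.mk_eq_zero]
    exact h2 w g hg
end

namespace Dat
variable {R : Type} [CommRing R] [IsNoetherianRing R] {J : Ideal R} {L1 L2 N : Type} [AddCommGroup L1] [Module R L1]
    [AddCommGroup L2] [Module R L2] [AddCommGroup N] [Module R N] 
    (D : Dat J L1 L2 N)
variable [Module.Free R L1] [Module.Finite R L1] [Module.Free R L2] [Module.Finite R L2]

abbrev b : L2 ⊗[R] D.P →ₗ[R] L1 ⊗[R] D.P := D.d.rTensor D.P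
abbrev e' : L1 ⊗[R] D.P →ₗ[R] R ⊗[R] D.P := D.f.rTensor D.P
def e : L1 ⊗[R] D.P →ₗ[R] D.P := (TensorProduct.lid R D.P).toLinearMap ∘ₗ D.e'
abbrev A1 : Submodule R (L1 ⊗[R] D.P) := LinearMap.range D.b
abbrev K2 : Submodule R (L2 ⊗[R] D.P) := LinearMap.ker D.b
abbrev A0 : Submodule R D.P := LinearMap.range D.e
abbrev K1 : Submodule R (L1 ⊗[R] D.P) := LinearMap.ker D.e

lemma e_tmul (l : L1) (x : D.P) : D.e (l ⊗ₜ x) = D.f l • x := by simp [e]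

lemma b_range_a (w : L2 ⊗[R] D.P) (hw : D.b w = 0) (g : R) (hg : g ∈ J ^ D.c) : 
    ∃ u, D.P.subtype.rTensor D.P u = g • w := by
  have ex := rTensor_exact D.P D.ses2.ex D.ses2.surj
  refine (ex (g • w)).1 ?_
  rw [map_smul]
  refine D.tor_kill g hg D.Z1.subtype Subtype.val_injective _ ?_
  rw [← LinearMap.comp_apply, ← LinearMap.rTensor_comp]
  exact hw

lemma e_range_b (w : L1 ⊗[R] D.P) (hw : D.e w = 0) (g : R) (hg : g ∈ J ^ D.c) : 
    ∃ u, D.b u = g • w := by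
  have ex := rTensor_exact D.P D.ses1.ex D.ses1.surj
  have : D.fZ.rTensor D.P (g • w) = 0 := by
    rw [map_smul]
    refine D.tor_kill g hg D.Z0.subtype Subtype.val_injective _ ?_
    rw [← LinearMap.comp_apply, ← LinearMap.rTensor_comp]
    exact (TensorProduct.lid R D.P).injective (hw.trans (map_zero _).symm)
  obtain ⟨v, hv⟩ := (ex (g • w)).1 this
  obtain ⟨u, rfl⟩ := LinearMap.rTensor_surjective D.P D.dZ_surj v
  refine ⟨u, ?_⟩
  rw [← hv, ← LinearMap.comp_apply, ← LinearMap.rTensor_comp]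
  rfl

lemma e_coker (w : D.P) (g : R) (hg : g ∈ J ^ D.c) : ∃ u, D.e u = g • w := by
  obtain ⟨y, rfl⟩ := D.hc g hg
  exact ⟨y ⊗ₜ w, D.e_tmul y w⟩

lemma A0_isog (i : ℕ) : Function.Bijective (Hm J (i+2) D.A0.subtype) := by
  refine isog' J _ D.c 1 ?_ ?_ i
  · intro w hw g hg
    have : w = 0 := Subtype.ext hw
    simp [this]
  · intro w g hg
    obtain ⟨u, hu⟩ := D.e_coker w g hg
    exact ⟨⟨_, u, rfl⟩, by rw [pow_one]; exact hu⟩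

lemma vA0 : Vn J 2 D.A0 := by
  intro z
  apply (D.A0_isog 0).1
  rw [map_zero]
  exact Vn.equiv (D.vP_2 R) (TensorProduct.lid R D.P) _

lemma He_zero (z : H J 3 (L1 ⊗[R] D.P)) : Hm J 3 D.e z = 0 := by
  obtain ⟨x, rfl⟩ := (D.σ_bij L1).2 z
  rw [e, Hm_comp, D.σ_nat]
  have : D.f.rTensor N x = 0 := by
    induction x using TensorProduct.induction_on with
    | zero => simp
    | tmul x y => 
      rw [LinearMap.rTensor_tmul, ← mul_one (D.f x), ← smul_eq_mul, TensorProduct.smul_tmul, D.f_killN, TensorProduct.tmul_zero]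
    | add x y hx hy => rw [map_add, hx, hy, add_zero]
  rw [this, map_zero, map_zero]

lemma HK1 : Function.Bijective (Hm J 3 D.K1.subtype) := by
  have s := SES_ker D.e
  refine ⟨Hf_inj s D.vA0, fun z => (exact₂ J s 3 z).1 ?_⟩
  apply (D.A0_isog 1).1
  rw [map_zero, ← Hm_comp]
  exact D.He_zero z

lemma eb (x) : D.e (D.b x) = 0 := by
  induction x using TensorProduct.induction_on with
  | zero => simp
  | tmul x y => rw [b, LinearMap.rTensor_tmul, e_tmul, D.fd, zero_smul]
  | add x y hx hy => rw [map_add, map_add, hx, hy, add_zero]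

lemma A1_le : D.A1 ≤ D.K1 := by
  rintro _ ⟨x, rfl⟩
  exact D.eb x

lemma HA1 : Function.Bijective (Hm J 3 D.A1.subtype) := by
  have h : Function.Bijective (Hm J 3 (Submodule.inclusion D.A1_le)) := by
    refine isog' J _ D.c 1 ?_ ?_ 1
    · intro w hw g hg
      have : w = 0 := Submodule.inclusion_injective _ (hw.trans (map_zero _).symm)
      simp [this]
    · rintro ⟨w, hw⟩ g hg
      obtain ⟨u, hu⟩ := D.e_range_b w hw g hg
      exact ⟨⟨_, u, rfl⟩, Subtype.ext (by rw [pow_one]; exact hu)⟩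
  have e2 : (Hm J 3 D.A1.subtype : H J 3 D.A1 → _) = Hm J 3 D.K1.subtype ∘ Hm J 3 (Submodule.inclusion D.A1_le) := by
    funext z
    exact Hm_comp J 3 D.K1.subtype (Submodule.inclusion D.A1_le) z
  rw [e2]
  exact D.HK1.comp h

/-- `P ⊗ P → K2` -/
def aK : D.P ⊗[R] D.P →ₗ[R] D.K2 := (D.P.subtype.rTensor D.P).codRestrict D.K2 (by
  intro x
  rw [LinearMap.mem_ker, ← LinearMap.comp_apply, ← LinearMap.rTensor_comp]
  have : D.d ∘ₗ D.P.subtype = 0 := by ext x; exact x.2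
  rw [this]; simp)

lemma HaK : Function.Bijective (Hm J 4 D.aK) := by
  refine isog' J _ D.c 1 ?_ ?_ 2
  · intro w hw g hg
    rw [pow_one]
    exact D.tor_kill g hg D.P.subtype Subtype.val_injective w (congrArg Subtype.val hw)
  · rintro ⟨w, hw⟩ g hg
    obtain ⟨u, hu⟩ := D.b_range_a w hw g hg
    exact ⟨u, Subtype.ext (by rw [pow_one]; exact hu)⟩

def eA1 : H J 3 D.A1 ≃ₗ[R] H J 3 (L1 ⊗[R] D.P) := LinearEquiv.ofBijective _ D.HA1

def Ψ : L1 ⊗[R] N →ₗ[R] H J 4 D.K2 := 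
  δ J (SES_ker D.b) 3 ∘ₗ D.eA1.symm.toLinearMap ∘ₗ D.σ L1

lemma Ψ_surj : Function.Surjective D.Ψ := 
  (δ_surj (SES_ker D.b) (D.vP_4 L2)).comp (D.eA1.symm.surjective.comp (D.σ_bij L1).2)

lemma Ψ_ker : LinearMap.ker D.Ψ = LinearMap.range (D.d.rTensor N) := by
  have key : ∀ x : L2 ⊗[R] N, D.eA1 (Hm J 3 D.b.rangeRestrict (D.σ L2 x)) = D.σ L1 (D.d.rTensor N x) := by
    intro x
    rw [← D.σ_nat]
    exact (Hm_comp J 3 D.A1.subtype D.b.rangeRestrict _).symm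
  ext w
  rw [LinearMap.mem_ker]
  show δ J (SES_ker D.b) 3 (D.eA1.symm (D.σ L1 w)) = 0 ↔ _
  rw [exact₃ J (SES_ker D.b) 3]
  constructor
  · rintro ⟨y, hy⟩
    obtain ⟨x, rfl⟩ := (D.σ_bij L2).2 y
    refine ⟨x, (D.σ_bij L1).1 ?_⟩
    rw [← key, hy, LinearEquiv.apply_symm_apply]
  · rintro ⟨x, rfl⟩
    refine ⟨D.σ L2 x, ?_⟩
    rw [LinearEquiv.eq_symm_apply, key]

/-- The computation of `H^4(P ⊗ P)`. -/
def main1 : H J 4 (D.P ⊗[R] D.P) ≃ₗ[R] (L1 ⊗[R] N) ⧸ LinearMap.range (D.d.rTensor N) :=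
  (LinearEquiv.ofBijective _ D.HaK).trans 
    ((LinearMap.quotKerEquivOfSurjective D.Ψ D.Ψ_surj).symm.trans (Submodule.quotEquivOfEq _ _ D.Ψ_ker))

end Dat
end LC
end

noncomputable section
set_option linter.unusedSectionVars false

namespace LC

section
variable (R : Type) [CommRing R] (M : Type) [AddCommGroup M] [Module R M]
  {M' : Type} [AddCommGroup M'] [Module R M'] {X : Type} [AddCommGroup X] [Module R X]

/-- The span of the squares `x ⊗ x`. -/
def DD : Submodule R (M ⊗[R] M) := Submodule.span R (Set.range fun x : M => x ⊗ₜ[R] x)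

/-- The alternating square. -/
def Alt2 : Type := (M ⊗[R] M) ⧸ DD R M

instance : AddCommGroup (Alt2 R M) := inferInstanceAs (AddCommGroup ((M ⊗[R] M) ⧸ DD R M))
instance : Module R (Alt2 R M) := inferInstanceAs (Module R ((M ⊗[R] M) ⧸ DD R M))

def amk : M ⊗[R] M →ₗ[R] Alt2 R M := (DD R M).mkQ

lemma amk_surj : Function.Surjective (amk R M) := (DD R M).mkQ_surjective

lemma sesAlt : SES (DD R M).subtype (amk R M) := SES_quot (DD R M)

lemma amk_eq_zero (u : M ⊗[R] M) : amk R M u = 0 ↔ u ∈ DD R M := Submodule.Quotient.mk_eq_zero _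

variable {R M}

lemma amk_self (x : M) : amk R M (x ⊗ₜ x) = 0 := (amk_eq_zero R M _).2 (Submodule.subset_span ⟨x, rfl⟩)

lemma amk_swap (x y : M) : amk R M (x ⊗ₜ y) = - amk R M (y ⊗ₜ x) := by
  have h := amk_self (R := R) (x + y)
  rw [TensorProduct.add_tmul, TensorProduct.tmul_add, TensorProduct.tmul_add, map_add, map_add, map_add, amk_self, amk_self,
    zero_add, add_zero] at h
  exact eq_neg_of_add_eq_zero_left h

lemma DD_le (B : M ⊗[R] M →ₗ[R] X) (h : ∀ x, B (x ⊗ₜ x) = 0) : DD R M ≤ LinearMap.ker B := by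
  rw [DD, Submodule.span_le]
  rintro _ ⟨x, rfl⟩
  exact h x

def alift (B : M ⊗[R] M →ₗ[R] X) (h : ∀ x, B (x ⊗ₜ x) = 0) : Alt2 R M →ₗ[R] X := 
  (DD R M).liftQ B (DD_le B h)

lemma alift_amk (B : M ⊗[R] M →ₗ[R] X) (h : ∀ x, B (x ⊗ₜ x) = 0) (u) : alift B h (amk R M u) = B u := rfl

lemma alt_ext {f g : Alt2 R M →ₗ[R] X} (h : ∀ a b, f (amk R M (a ⊗ₜ b)) = g (amk R M (a ⊗ₜ b))) (m) : f m = g m := by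
  obtain ⟨u, rfl⟩ := amk_surj R M m
  induction u using TensorProduct.induction_on with
  | zero => simp
  | tmul x y => exact h x y
  | add x y hx hy => rw [map_add, map_add, map_add, hx, hy]

def amap (φ : M →ₗ[R] M') : Alt2 R M →ₗ[R] Alt2 R M' := 
  alift (amk R M' ∘ₗ TensorProduct.map φ φ) (fun x => amk_self _)

lemma amap_amk (φ : M →ₗ[R] M') (u) : amap φ (amk R M u) = amk R M' (TensorProduct.map φ φ u) := rfl

lemma DD_symm (u : M ⊗[R] M) (hu : u ∈ DD R M) : TensorProduct.comm R M M u = u := by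
  have := DD_le ((TensorProduct.comm R M M).toLinearMap - LinearMap.id) (by simp) hu
  simpa [sub_eq_zero] using this

def altM : M [⋀^Fin 2]→ₗ[R] Alt2 R M where
  toFun v := amk R M (v 0 ⊗ₜ v 1)
  map_update_add' m i x y := by
    fin_cases i <;> simp [TensorProduct.add_tmul, TensorProduct.tmul_add]
  map_update_smul' m i x y := by
    fin_cases i
    · simp [← TensorProduct.smul_tmul']
    · simp
  map_eq_zero_of_eq' v i j h hij := by
    have : v 0 = v 1 := by
      fin_cases i <;> fin_cases j <;> simp_all
    simp only [this]
    exact amk_self _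

lemma upd0 (x y z : M) : Function.update ![x, y] 0 z = ![z, y] := by
  ext i; fin_cases i <;> rfl
lemma upd1 (x y z : M) : Function.update ![x, y] 1 z = ![x, z] := by
  ext i; fin_cases i <;> rfl

def toExt : Alt2 R M →ₗ[R] ⋀[R]^2 M := alift (TensorProduct.lift (LinearMap.mk₂ R (fun x y : M => exteriorPower.ιMulti R 2 ![x, y])
   (by intro x x' y
       have := (exteriorPower.ιMulti R 2).map_update_add ![x, y] 0 x x'
       simpa only [Fin.isValue, upd0, upd1] using this) 
   (by intro c x y
       have := (exteriorPower.ιMulti R 2).map_update_smul ![x, y] 0 c x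
       simpa only [Fin.isValue, upd0, upd1] using this)
   (by intro x y y'
       have := (exteriorPower.ιMulti R 2).map_update_add ![x, y] 1 y y'
       simpa only [Fin.isValue, upd0, upd1] using this)
   (by intro c x y
       have := (exteriorPower.ιMulti R 2).map_update_smul ![x, y] 1 c y
       simpa only [Fin.isValue, upd0, upd1] using this))) (by
    intro x
    rw [TensorProduct.lift.tmul, LinearMap.mk₂_apply]
    exact (exteriorPower.ιMulti R 2).map_eq_zero_of_eq _ (i := 0) (j := 1) rfl (by simp))

lemma toExt_amk (x y : M) : toExt (amk R M (x ⊗ₜ y)) = exteriorPower.ιMulti R 2 ![x, y] := rfl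

def altE : Alt2 R M ≃ₗ[R] ⋀[R]^2 M := LinearEquiv.ofLinearMap toExt (exteriorPower.alternatingMapLinearEquiv altM)
  (by
    ext v
    simp only [LinearMap.compAlternatingMap_apply, LinearMap.comp_apply, exteriorPower.alternatingMapLinearEquiv_apply_ιMulti]
    show ((toExt (amk R M (v 0 ⊗ₜ v 1)) : ⋀[R]^2 M) : ExteriorAlgebra R M) = _
    rw [toExt_amk, LinearMap.id_apply]
    congr 2
    ext i; fin_cases i <;> rfl)
  (by
    apply LinearMap.ext
    apply alt_ext
    intro a b
    rw [LinearMap.comp_apply, toExt_amk, exteriorPower.alternatingMapLinearEquiv_apply_ιMulti]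
    rfl)

lemma Vn_alt (J : Ideal R) {i : ℕ} (h : Vn J i R) [Module.Free R M] [Module.Finite R M] : Vn J i (Alt2 R M) :=
  Vn.equiv (Vn_free (M := ⋀[R]^2 M) J h) altE.symm

end
end LC
end

noncomputable section
set_option linter.unusedSectionVars false

namespace LC

namespace Dat
variable {R : Type} [CommRing R] [IsNoetherianRing R] {J : Ideal R} {L1 L2 N : Type} [AddCommGroup L1] [Module R L1]
    [AddCommGroup L2] [Module R L2] [AddCommGroup N] [Module R N] 
    (D : Dat J L1 L2 N)
variable [Module.Free R L1] [Module.Finite R L1] [Module.Free R L2] [Module.Finite R L2]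

/-- `DD L2 → L2 ⊗ Z1` -/
def v : DD R L2 →ₗ[R] L2 ⊗[R] D.Z1 := (D.dZ.lTensor L2) ∘ₗ (DD R L2).subtype

abbrev Q : Submodule R (L2 ⊗[R] D.Z1) := LinearMap.range D.v
abbrev D1 : Submodule R (DD R L2) := LinearMap.ker D.v
abbrev Lam : Type := (L2 ⊗[R] D.Z1) ⧸ D.Q

def κ0 : L1 ⊗[R] L1 →ₗ[R] L1 := (TensorProduct.lid R L1).toLinearMap ∘ₗ D.f.rTensor L1 - 
  (TensorProduct.rid R L1).toLinearMap ∘ₗ D.f.lTensor L1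

lemma κ0_tmul (a b : L1) : D.κ0 (a ⊗ₜ b) = D.f a • b - D.f b • a := by simp [κ0]

def κ' : Alt2 R L1 →ₗ[R] L1 := alift D.κ0 (fun x => by rw [κ0_tmul, sub_self])

lemma κ'_amk (a b : L1) : D.κ' (amk R L1 (a ⊗ₜ b)) = D.f a • b - D.f b • a := by
  rw [κ', alift_amk, κ0_tmul]

lemma f_κ' (m) : D.f (D.κ' m) = 0 := by
  have := alt_ext (f := D.f ∘ₗ D.κ') (g := 0) (by
    intro a b
    rw [LinearMap.comp_apply, κ'_amk, map_sub, map_smul, map_smul, smul_eq_mul, smul_eq_mul, mul_comm, sub_self]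
    rfl) m
  exact this

def κ : Alt2 R L1 →ₗ[R] D.Z1 := D.κ'.codRestrict D.Z1 D.f_κ'

lemma κ_coe (m) : (D.κ m : L1) = D.κ' m := rfl

abbrev Kk : Submodule R (Alt2 R L1) := LinearMap.ker D.κ
abbrev Bk : Submodule R D.Z1 := LinearMap.range D.κ

def b1 : L2 ⊗[R] L1 →ₗ[R] Alt2 R L1 := amk R L1 ∘ₗ D.d.rTensor L1

lemma b1_tmul (x : L2) (l : L1) : D.b1 (x ⊗ₜ l) = amk R L1 (D.d x ⊗ₜ l) := rfl

lemma κ_b1 (x : L2) (l : L1) : D.κ (D.b1 (x ⊗ₜ l)) = - (D.f l • D.dZ x) := by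
  apply Subtype.ext
  rw [κ_coe, b1_tmul, κ'_amk, D.fd, zero_smul, zero_sub]
  rfl

lemma a1_mem (u : L2 ⊗[R] D.Z1) : D.b1 (D.Z1.subtype.lTensor L2 u) ∈ D.Kk := by
  rw [LinearMap.mem_ker]
  induction u using TensorProduct.induction_on with
  | zero => simp
  | tmul x y => 
    rw [LinearMap.lTensor_tmul, κ_b1]
    have : D.f (D.Z1.subtype y) = 0 := y.2
    rw [this, zero_smul, neg_zero]
  | add x y hx hy => rw [map_add, map_add, map_add, hx, hy, add_zero]

def a1 : L2 ⊗[R] D.Z1 →ₗ[R] D.Kk := (D.b1 ∘ₗ D.Z1.subtype.lTensor L2).codRestrict D.Kk D.a1_mem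

/-- `x ⊗ r ↦ r • x` -/
def m0 : L2 ⊗[R] D.Z0 →ₗ[R] L2 := (TensorProduct.rid R L2).toLinearMap ∘ₗ D.Z0.subtype.lTensor L2
def m1 : L2 →ₗ[R] L2 ⊗[R] N := D.p.lTensor L2 ∘ₗ (TensorProduct.rid R L2).symm.toLinearMap

lemma sesm : SES D.m0 D.m1 where
  inj := (TensorProduct.rid R L2).injective.comp (D.ses0.lT L2).inj
  ex := by
    intro y
    have := (D.ses0.lT L2).ex ((TensorProduct.rid R L2).symm y)
    refine this.trans ?_
    constructor
    · rintro ⟨u, hu⟩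
      exact ⟨u, by rw [m0, LinearMap.comp_apply, hu]; exact LinearEquiv.apply_symm_apply _ _⟩
    · rintro ⟨u, rfl⟩
      exact ⟨u, by rw [m0, LinearMap.comp_apply]; exact (LinearEquiv.symm_apply_apply _ _).symm⟩
  surj := (D.ses0.lT L2).surj.comp (TensorProduct.rid R L2).symm.surjective

lemma m0_tmul (x : L2) (z : D.Z0) : D.m0 (x ⊗ₜ z) = (z : R) • x := by simp [m0]

def b2 : L2 →ₗ[R] D.Z1 := - D.dZ

lemma b2_surj : Function.Surjective D.b2 := by
  intro z
  obtain ⟨x, rfl⟩ := D.dZ_surj z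
  exact ⟨-x, by simp [b2]⟩

lemma b2_f (w : L2 ⊗[R] L1) : D.b2 (D.m0 (D.fZ.lTensor L2 w)) = D.κ (D.b1 w) := by
  induction w using TensorProduct.induction_on with
  | zero => simp
  | tmul x y => rw [LinearMap.lTensor_tmul, κ_b1, m0_tmul, b2, LinearMap.neg_apply, map_smul]; rfl
  | add x y hx hy => rw [map_add, map_add, map_add, map_add, map_add, hx, hy]

lemma c1_mem (u : L2 ⊗[R] D.Z0) : D.b2 (D.m0 u) ∈ D.Bk := by
  obtain ⟨w, rfl⟩ := LinearMap.lTensor_surjective L2 D.fZ_surj u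
  rw [b2_f]
  exact ⟨_, rfl⟩

def c1 : L2 ⊗[R] D.Z0 →ₗ[R] D.Bk := (D.b2 ∘ₗ D.m0).codRestrict D.Bk D.c1_mem

end Dat

section
variable {R : Type} [CommRing R] {A B C A' B' C' : Type} [AddCommGroup A] [Module R A] [AddCommGroup B] [Module R B]
  [AddCommGroup C] [Module R C] [AddCommGroup A'] [Module R A'] [AddCommGroup B'] [Module R B']
  [AddCommGroup C'] [Module R C']

lemma SES.induce {f : A →ₗ[R] B} {g : B →ₗ[R] C} (h : SES f g) {f' : A' →ₗ[R] B'} {g' : B' →ₗ[R] C'} (h' : SES f' g')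
    (a : A →ₗ[R] A') (b : B →ₗ[R] B') (hab : f' ∘ₗ a = b ∘ₗ f) : ∃ c : C →ₗ[R] C', g' ∘ₗ b = c ∘ₗ g := by
  refine ⟨(LinearMap.ker g).liftQ (g' ∘ₗ b) ?_ ∘ₗ (g.quotKerEquivOfSurjective h.surj).symm.toLinearMap, ?_⟩
  · intro x hx
    obtain ⟨y, rfl⟩ := (h.ex x).1 hx
    rw [LinearMap.mem_ker, LinearMap.comp_apply, ← LinearMap.comp_apply b, ← hab, LinearMap.comp_apply]
    exact (h'.ex _).2 ⟨_, rfl⟩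
  · ext x
    have : (g.quotKerEquivOfSurjective h.surj).symm (g x) = (LinearMap.ker g).mkQ x := by
      rw [LinearEquiv.symm_apply_eq]; rfl
    simp only [LinearMap.comp_apply, LinearEquiv.coe_coe, this]
    rfl
end

namespace Dat
variable {R : Type} [CommRing R] [IsNoetherianRing R] {J : Ideal R} {L1 L2 N : Type} [AddCommGroup L1] [Module R L1]
    [AddCommGroup L2] [Module R L2] [AddCommGroup N] [Module R N] 
    (D : Dat J L1 L2 N)
variable [Module.Free R L1] [Module.Finite R L1] [Module.Free R L2] [Module.Finite R L2]

lemma Hc1_surj : Function.Surjective (Hm J 1 D.c1) := by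
  have hab : D.Bk.subtype ∘ₗ D.c1 = D.b2 ∘ₗ D.m0 := rfl
  obtain ⟨c2, h2⟩ := D.sesm.induce (SES_quot D.Bk) D.c1 D.b2 hab
  have hc : Function.Surjective c2 := by
    have : Function.Surjective (c2 ∘ₗ D.m1) := by
      rw [← h2]
      exact (D.Bk.mkQ_surjective).comp D.b2_surj
    exact Function.Surjective.of_comp this
  exact ladder D.sesm (SES_quot D.Bk) D.c1 D.b2 c2 hab h2 (H0_surj J (D.torsFN L2) c2 hc) 
    (Vn.equiv (D.vZ1_1 R) (TensorProduct.lid R D.Z1))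

lemma Ha1_surj : Function.Surjective (Hm J 2 D.a1) := by
  refine ladder (D.ses1.lT L2) (SES_ker D.κ) D.a1 D.b1 D.c1 rfl ?_ D.Hc1_surj (Vn_alt J (D.vn 2 (by lia)))
  apply LinearMap.ext
  intro w
  apply Subtype.ext
  show D.κ (D.b1 w) = D.b2 (D.m0 (D.fZ.lTensor L2 w))
  rw [b2_f]

/-- `Alt2 L2 → Lam` -/
def r : Alt2 R L2 →ₗ[R] D.Lam := alift (D.Q.mkQ ∘ₗ D.dZ.lTensor L2) (by
  intro x
  rw [LinearMap.comp_apply, Submodule.mkQ_apply, Submodule.Quotient.mk_eq_zero]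
  exact ⟨⟨x ⊗ₜ x, Submodule.subset_span ⟨x, rfl⟩⟩, rfl⟩)

lemma r_amk (u) : D.r (amk R L2 u) = D.Q.mkQ (D.dZ.lTensor L2 u) := rfl

lemma r_surj : Function.Surjective D.r := by
  intro w
  obtain ⟨w, rfl⟩ := D.Q.mkQ_surjective w
  obtain ⟨u, rfl⟩ := LinearMap.lTensor_surjective L2 D.dZ_surj w
  exact ⟨amk R L2 u, rfl⟩

lemma a1_dZ (u : L2 ⊗[R] L2) : (D.a1 (D.dZ.lTensor L2 u) : Alt2 R L1) = amap D.d (amk R L2 u) := by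
  rw [amap_amk]
  show amk R L1 (D.d.rTensor L1 (D.Z1.subtype.lTensor L2 (D.dZ.lTensor L2 u))) = _
  congr 1
  induction u using TensorProduct.induction_on with
  | zero => simp
  | tmul x y => rfl
  | add x y hx hy => simp only [map_add, hx, hy]

lemma Q_le : D.Q ≤ LinearMap.ker D.a1 := by
  rintro _ ⟨⟨u, hu⟩, rfl⟩
  apply Subtype.ext
  show (D.a1 (D.dZ.lTensor L2 u) : Alt2 R L1) = 0
  rw [a1_dZ, (amk_eq_zero R L2 u).2 hu, map_zero]

def ι' : D.Lam →ₗ[R] D.Kk := D.Q.liftQ D.a1 D.Q_le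

lemma ι'_r (m : Alt2 R L2) : (D.ι' (D.r m) : Alt2 R L1) = amap D.d m := by
  obtain ⟨u, rfl⟩ := amk_surj R L2 m
  exact D.a1_dZ u

lemma r_P (p : D.P) (x : L2) : D.r (amk R L2 ((p : L2) ⊗ₜ x)) = 0 := by
  rw [amk_swap, map_neg, r_amk, LinearMap.lTensor_tmul]
  have : D.dZ p = 0 := Subtype.ext p.2
  rw [this, TensorProduct.tmul_zero, map_zero, neg_zero]

lemma r_P' (p : D.P) (x : L2) : D.r (amk R L2 (x ⊗ₜ (p : L2))) = 0 := by
  rw [amk_swap, map_neg, r_P, neg_zero]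

lemma ι'_ker (g : R) (hg : g ∈ J ^ D.c) (w : D.Lam) (hw : D.ι' w = 0) : g ^ 2 • w = 0 := by
  obtain ⟨y, s, θ, hy, hs, hθ, -⟩ := D.homot g hg
  obtain ⟨m, rfl⟩ := D.r_surj w
  have h0 : amap D.d m = 0 := by rw [← ι'_r, hw]; rfl
  have key : (D.r ∘ₗ amap s ∘ₗ amap D.d) m = (g ^ 2 • D.r) m := by
    apply alt_ext
    intro a b
    have e : ∀ x, s (D.d x) = g • x - θ x := by intro x; rw [hθ]; simp
    simp only [LinearMap.comp_apply, amap_amk, TensorProduct.map_tmul, e, TensorProduct.sub_tmul, TensorProduct.tmul_sub,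
      map_sub, r_P, r_P', LinearMap.smul_apply, sub_zero, TensorProduct.tmul_smul, ← TensorProduct.smul_tmul', map_smul, 
      smul_zero, pow_two, smul_smul]
  rw [LinearMap.comp_apply, LinearMap.comp_apply, h0, map_zero, map_zero] at key
  exact key.symm

lemma ι'_coker (g : R) (hg : g ∈ J ^ D.c) (w : D.Kk) : ∃ a, D.ι' a = g ^ 2 • w := by
  obtain ⟨y, s, θ, hy, hs, hθ, -⟩ := D.homot g hg
  refine ⟨D.r (amap s w), Subtype.ext ?_⟩
  rw [ι'_r]
  let Y : L1 →ₗ[R] Alt2 R L1 := amk R L1 ∘ₗ TensorProduct.mk R L1 L1 y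
  have Yd : ∀ a, amk R L1 (y ⊗ₜ a) = Y a := fun a => rfl
  have key : (amap D.d ∘ₗ amap s) w.1 = (g ^ 2 • LinearMap.id - g • (Y ∘ₗ D.κ') : Alt2 R L1 →ₗ[R] Alt2 R L1) w.1 := by
    apply alt_ext
    intro a b
    have e1 : amk R L1 (a ⊗ₜ y) = - Y a := amk_swap a y
    simp only [LinearMap.comp_apply, amap_amk, TensorProduct.map_tmul, hs, TensorProduct.sub_tmul, TensorProduct.tmul_sub,
      map_sub, LinearMap.smul_apply, LinearMap.sub_apply, TensorProduct.tmul_smul, ← TensorProduct.smul_tmul', map_smul, 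
      κ'_amk, e1, amk_self, Yd, LinearMap.id_apply]
    have e2 : Y y = 0 := amk_self y
    rw [e2]
    module
  have hk : D.κ' w.1 = 0 := congrArg Subtype.val w.2
  rw [LinearMap.comp_apply] at key
  rw [key]
  simp [hk]

lemma Hι' : Function.Bijective (Hm J 2 D.ι') :=
  isog' J D.ι' D.c 2 (fun w hw g hg => D.ι'_ker g hg w hw) (fun w g hg => D.ι'_coker g hg w) 0

lemma HmkQ_surj : Function.Surjective (Hm J 2 D.Q.mkQ) := by
  intro y
  obtain ⟨x, hx⟩ := D.Ha1_surj (Hm J 2 D.ι' y)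
  refine ⟨x, D.Hι'.1 ?_⟩
  rw [← hx, ← Hm_comp]
  rfl

lemma vQ : Vn J 3 D.Q := by
  intro z
  have s := SES_quot D.Q
  obtain ⟨y, rfl⟩ := (exact₁ J s 2 z).1 (D.vZ1_3 L2 _)
  obtain ⟨x, rfl⟩ := D.HmkQ_surj y
  exact (exact₃ J s 2 _).2 ⟨x, rfl⟩

include D in
lemma vDD : Vn J 4 (DD R L2) := Vn_left (sesAlt R L2) (Vn_alt J (D.vn 3 (by lia))) (D.vf _ 4 (by lia))

lemma vD1 : Vn J 4 D.D1 := Vn_left (SES_ker D.v) D.vQ D.vDD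

end Dat
end LC
end

noncomputable section
set_option linter.unusedSectionVars false

namespace LC

section
variable {R : Type} [CommRing R] [IsNoetherianRing R] (J : Ideal R)
variable {A B A' B' X : Type} [AddCommGroup A] [Module R A] [AddCommGroup B] [Module R B]
  [AddCommGroup A'] [Module R A'] [AddCommGroup B'] [Module R B'] [AddCommGroup X] [Module R X]

lemma Vn_ker_isog (α : A →ₗ[R] X) (β : B →ₗ[R] X) (hα : Function.Injective α) (hβ : Function.Injective β)
    (q : A →ₗ[R] A') (v : B →ₗ[R] B') (h : ∀ a, q a = 0 → ∃ b, v b = 0 ∧ β b = α a) (c : ℕ)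
    (h2 : ∀ b, v b = 0 → ∀ g ∈ J ^ c, ∃ a, q a = 0 ∧ α a = g • β b) (i : ℕ) 
    (hB : Vn J (i+2) (LinearMap.ker v)) : Vn J (i+2) (LinearMap.ker q) := by
  let α' := α ∘ₗ (LinearMap.ker q).subtype
  let β' := β ∘ₗ (LinearMap.ker v).subtype
  have hα' : Function.Injective α' := hα.comp Subtype.val_injective
  have hβ' : Function.Injective β' := hβ.comp Subtype.val_injective
  let t : LinearMap.ker q →ₗ[R] LinearMap.ker v := (LinearEquiv.ofInjective β' hβ').symm.toLinearMap ∘ₗ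
    α'.codRestrict (LinearMap.range β') (by
      rintro ⟨a, ha⟩
      obtain ⟨b, hb, hab⟩ := h a ha
      exact ⟨⟨b, hb⟩, hab⟩)
  have ht : ∀ a, β' (t a) = α' a := by
    intro a
    have := LinearEquiv.apply_symm_apply (LinearEquiv.ofInjective β' hβ') (α'.codRestrict (LinearMap.range β') (by
      rintro ⟨a, ha⟩
      obtain ⟨b, hb, hab⟩ := h a ha
      exact ⟨⟨b, hb⟩, hab⟩) a)
    exact congrArg Subtype.val this
  have hb : Function.Bijective (Hm J (i+2) t) := by
    refine isog' J t c 1 ?_ ?_ i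
    · intro w hw g hg
      have : w = 0 := by
        apply hα'
        rw [← ht, hw, map_zero, map_zero]
      rw [this, smul_zero]
    · rintro w g hg
      obtain ⟨a, ha, hab⟩ := h2 w.1 w.2 g hg
      refine ⟨⟨a, ha⟩, hβ' ?_⟩
      rw [ht, pow_one, map_smul]
      exact hab
  intro z
  apply hb.1
  rw [map_zero]
  exact hB _
end

namespace Dat
variable {R : Type} [CommRing R] [IsNoetherianRing R] {J : Ideal R} {L1 L2 N : Type} [AddCommGroup L1] [Module R L1]
    [AddCommGroup L2] [Module R L2] [AddCommGroup N] [Module R N] 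
    (D : Dat J L1 L2 N)
variable [Module.Free R L1] [Module.Finite R L1] [Module.Free R L2] [Module.Finite R L2]

def ii : D.P ⊗[R] D.P →ₗ[R] L2 ⊗[R] L2 := D.P.subtype.lTensor L2 ∘ₗ D.P.subtype.rTensor D.P

lemma ii_eq (u) : D.ii u = TensorProduct.map D.P.subtype D.P.subtype u := by
  rw [ii, LinearMap.lTensor_comp_rTensor]

abbrev Jm : Submodule R (L2 ⊗[R] L2) := LinearMap.range D.ii

def jj : D.P ⊗[R] D.P →ₗ[R] D.Jm := D.ii.rangeRestrict

lemma Hjj : Function.Bijective (Hm J 4 D.jj) := by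
  refine isog' J D.jj D.c 1 ?_ ?_ 2
  · intro w hw g hg
    rw [pow_one]
    refine D.tor_kill g hg D.P.subtype Subtype.val_injective w ?_
    apply Module.Flat.lTensor_preserves_injective_linearMap (M := L2) D.P.subtype Subtype.val_injective
    rw [map_zero]
    exact congrArg Subtype.val hw
  · intro w g hg
    exact D.ii.surjective_rangeRestrict _

def q : D.Jm →ₗ[R] Alt2 R L2 := amk R L2 ∘ₗ D.Jm.subtype

abbrev D2 : Submodule R D.Jm := LinearMap.ker D.q

lemma dZ_ii (x) : D.dZ.lTensor L2 (D.ii x) = 0 := 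
  (lTensor_exact L2 D.ses2.ex D.ses2.surj _).2 ⟨_, rfl⟩

lemma tt_coker (g : R) (hg : g ∈ J ^ D.c) (u : L2 ⊗[R] L2) (hu : u ∈ DD R L2) (hw : D.dZ.lTensor L2 u = 0) : 
   ∃ a : D.Jm, D.q a = 0 ∧ a.1 = g • u := by
  obtain ⟨y, s, θ, hy, hs, hθ, -⟩ := D.homot g hg
  obtain ⟨x, hx⟩ := (lTensor_exact L2 D.ses2.ex D.ses2.surj u).1 hw
  have hd : D.d.rTensor L2 u = 0 := by
    have h1 : D.d.lTensor L2 u = 0 := by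
      have : D.d = D.Z1.subtype ∘ₗ D.dZ := rfl
      rw [this, LinearMap.lTensor_comp, LinearMap.comp_apply, hw, map_zero]
    have h2 : D.d.rTensor L2 u = TensorProduct.comm R L2 L1 (D.d.lTensor L2 (TensorProduct.comm R L2 L2 u)) := by
      clear * -
      induction u using TensorProduct.induction_on with
      | zero => simp
      | tmul x y => rfl
      | add x y hx hy => simp only [map_add, hx, hy]
    rw [h2, DD_symm u hu, h1, map_zero]
  have e : g • u = D.ii (θ.rTensor D.P x) := by
    have e1 : g • u = (D.P.subtype ∘ₗ θ).rTensor L2 u := by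
      have : D.P.subtype ∘ₗ θ = g • LinearMap.id - s ∘ₗ D.d := by
        ext x; simp [hθ]
      rw [this, LinearMap.rTensor_sub, LinearMap.rTensor_smul, LinearMap.rTensor_id, LinearMap.rTensor_comp]
      simp [hd]
    rw [e1, ← hx]
    clear * -
    induction x using TensorProduct.induction_on with
    | zero => simp
    | tmul x y => rfl
    | add x y hx hy => simp only [map_add, hx, hy]
  refine ⟨⟨g • u, _, e.symm⟩, ?_, ?_⟩
  · show amk R L2 (g • u) = 0
    rw [map_smul, (amk_eq_zero R L2 u).2 hu, smul_zero]
  · rfl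

lemma vD2 : Vn J 4 D.D2 := by
  refine Vn_ker_isog J D.Jm.subtype (DD R L2).subtype Subtype.val_injective Subtype.val_injective D.q D.v ?_ D.c ?_ 2 D.vD1
  · rintro ⟨_, x, rfl⟩ hx
    exact ⟨⟨_, (amk_eq_zero R L2 _).1 hx⟩, D.dZ_ii x, rfl⟩
  · rintro ⟨u, hu⟩ hw g hg
    exact D.tt_coker g hg u hu hw

/-- `Alt2 P → W` -/
def mq : Alt2 R D.P →ₗ[R] LinearMap.range D.q := (amap D.P.subtype).codRestrict _ (by
  intro m
  obtain ⟨u, rfl⟩ := amk_surj R _ m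
  refine ⟨D.jj u, ?_⟩
  rw [amap_amk, ← ii_eq]; rfl)

lemma mq_amk (u) : D.mq (amk R D.P u) = D.q.rangeRestrict (D.jj u) := by
  apply Subtype.ext
  show amap D.P.subtype (amk R D.P u) = amk R L2 (D.ii u)
  rw [amap_amk, ← ii_eq]

/-- vanishing for the alternating square implies vanishing for the tensor square -/
lemma main2 (h : Vn J 4 (Alt2 R D.P)) : Vn J 4 (D.P ⊗[R] D.P) := by
  intro z
  apply D.Hjj.1
  rw [map_zero]
  have s := SES_ker D.q
  have h0 : Hm J 4 D.q.rangeRestrict (Hm J 4 D.jj z) = 0 := by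
    have e : D.q.rangeRestrict ∘ₗ D.jj = D.mq ∘ₗ amk R D.P := by
      apply LinearMap.ext
      intro u
      exact (D.mq_amk u).symm
    rw [← Hm_comp, e, Hm_comp, h (Hm J 4 (amk R D.P) z), map_zero]
  obtain ⟨y, hy⟩ := (exact₂ J s 4 _).1 h0
  rw [← hy, D.vD2 y, map_zero]

end Dat
end LC
end

noncomputable section
set_option linter.unusedSectionVars false

namespace LC
section
open MvPolynomial
variable {F : Type} [Field F] {m : ℕ}

/-- the irrelevant ideal -/
abbrev Im (F : Type) [Field F] (m : ℕ) : Ideal (MvPolynomial (Fin (m+1)) F) := 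
  Ideal.span (Set.range (MvPolynomial.X : Fin (m+1) → MvPolynomial (Fin (m+1)) F))

abbrev Sm (F : Type) [Field F] (m : ℕ) : Type := MvPolynomial (Fin (m+1)) F

lemma cc_zero (r : Sm F m) (hr : r ∈ Im F m) : constantCoeff r = 0 := by
  have : Im F m ≤ RingHom.ker (constantCoeff : Sm F m →+* F) := by
    rw [Ideal.span_le]
    rintro _ ⟨i, rfl⟩
    simp
  exact this hr

lemma coord_zero {L : Type} [AddCommGroup L] [Module (Sm F m) L] (φ : L →ₗ[Sm F m] Sm F m) (x : L) 
    (hx : x ∈ Im F m • (⊤ : Submodule (Sm F m) L)) : constantCoeff (φ x) = 0 := by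
  induction hx using Submodule.smul_induction_on' with
  | smul r hr x hx => rw [map_smul, smul_eq_mul, map_mul, cc_zero r hr, zero_mul]
  | add x hx y hy h1 h2 => rw [map_add, map_add, h1, h2, add_zero]

variable {N L0 L1 L2 : Type} [AddCommGroup N] [Module (Sm F m) N] [AddCommGroup L0] [Module (Sm F m) L0]
  [AddCommGroup L1] [Module (Sm F m) L1] [AddCommGroup L2] [Module (Sm F m) L2]

lemma rank_one [Module.Free (Sm F m) L0] [Module.Finite (Sm F m) L0] [Nontrivial N] (aug : L0 →ₗ[Sm F m] N) 
    (hs : Function.Surjective aug) (hmin : LinearMap.ker aug ≤ Im F m • (⊤ : Submodule (Sm F m) L0))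
    (hcyc : ∃ x : N, Submodule.span (Sm F m) {x} = ⊤) : Nonempty (L0 ≃ₗ[Sm F m] Sm F m) := by
  classical
  obtain ⟨x, hx⟩ := hcyc
  obtain ⟨e, rfl⟩ := hs x
  let b := Module.Free.chooseBasis (Sm F m) L0
  have h1 : ∀ i, ∃ r : Sm F m, b i - r • e ∈ LinearMap.ker aug := by
    intro i
    have : aug (b i) ∈ Submodule.span (Sm F m) {aug e} := by rw [hx]; trivial
    obtain ⟨r, hr⟩ := Submodule.mem_span_singleton.1 this
    exact ⟨r, by simp [hr]⟩
  choose r hr using h1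
  have h2 : ∀ i j, (if i = j then (1 : F) else 0) = constantCoeff (r i) * constantCoeff (b.coord j e) := by
    intro i j
    have h := coord_zero (b.coord j) _ (hmin (hr i))
    rw [map_sub, map_smul, smul_eq_mul, map_sub, map_mul, sub_eq_zero] at h
    rw [← h, Module.Basis.coord_apply, Module.Basis.repr_self, Finsupp.single_apply]
    split_ifs <;> simp
  have hsub : Subsingleton (Module.Free.ChooseBasisIndex (Sm F m) L0) := by
    constructor
    intro i j
    by_contra hij
    have a1 := h2 i i
    have a2 := h2 j j
    have a3 := h2 i j
    rw [if_pos rfl] at a1 a2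
    rw [if_neg hij] at a3
    rcases mul_eq_zero.1 a3.symm with h | h
    · rw [h, zero_mul] at a1; exact one_ne_zero a1
    · rw [h, mul_zero] at a2; exact one_ne_zero a2
  have hne : Nonempty (Module.Free.ChooseBasisIndex (Sm F m) L0) := by
    have : Nontrivial L0 := hs.nontrivial
    exact b.index_nonempty
  have : Unique (Module.Free.ChooseBasisIndex (Sm F m) L0) := uniqueOfSubsingleton hne.some
  exact ⟨b.equivFun.trans (LinearEquiv.funUnique _ _ _)⟩

lemma coker_nontriv [Nontrivial N] [Module.Free (Sm F m) L1] [Nontrivial L1] (c : ℕ) 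
    (hc : Im F m ^ c ≤ Module.annihilator (Sm F m) N) (d : L2 →ₗ[Sm F m] L1) 
    (hd : LinearMap.range d ≤ Im F m • (⊤ : Submodule (Sm F m) L1)) :
    Nontrivial ((L1 ⊗[Sm F m] N) ⧸ LinearMap.range (d.rTensor N)) := by
  have h1 : LinearMap.range (d.rTensor N) ≤ Im F m • (⊤ : Submodule (Sm F m) (L1 ⊗[Sm F m] N)) := by
    rintro _ ⟨u, rfl⟩
    induction u using TensorProduct.induction_on with
    | zero => simp
    | tmul x y => 
      rw [LinearMap.rTensor_tmul]
      have := hd ⟨x, rfl⟩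
      generalize d x = z at this
      induction this using Submodule.smul_induction_on' with
      | smul r hr x hx => 
        rw [← TensorProduct.smul_tmul']
        exact Submodule.smul_mem_smul hr trivial
      | add x hx y hy h1 h2 => rw [TensorProduct.add_tmul]; exact add_mem h1 h2
    | add x y hx hy => rw [map_add]; exact add_mem hx hy
  by_contra hcon
  rw [not_nontrivial_iff_subsingleton, Submodule.Quotient.subsingleton_iff] at hcon
  rw [hcon] at h1
  have h2 : ∀ k : ℕ, (⊤ : Submodule (Sm F m) (L1 ⊗[Sm F m] N)) ≤ Im F m ^ k • ⊤ := by
    intro k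
    induction k with
    | zero => simp
    | succ k ih => 
      rw [pow_succ, Submodule.mul_smul]
      exact ih.trans (Submodule.smul_mono le_rfl h1)
  have h3 : ∀ w : L1 ⊗[Sm F m] N, w = 0 := by
    intro w
    have : w ∈ Im F m ^ c • (⊤ : Submodule (Sm F m) (L1 ⊗[Sm F m] N)) := h2 c trivial
    induction this using Submodule.smul_induction_on' with
    | smul r hr x hx => 
      induction x using TensorProduct.induction_on with
      | zero => simp
      | tmul x y => 
        rw [← TensorProduct.tmul_smul, Module.mem_annihilator.1 (hc hr), TensorProduct.tmul_zero]
      | add x y h1 h2 => rw [smul_add, h1 trivial, h2 trivial, add_zero]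
    | add x hx y hy h1 h2 => rw [h1, h2, add_zero]
  let b := Module.Free.chooseBasis (Sm F m) L1
  obtain ⟨i⟩ := b.index_nonempty
  obtain ⟨x, hx⟩ := exists_ne (0 : N)
  apply hx
  have := congrArg ((TensorProduct.lid (Sm F m) N).toLinearMap ∘ₗ (b.coord i).rTensor N) (h3 (b i ⊗ₜ x))
  simpa using this

lemma L1_nontriv [Nontrivial N] [Module.Free (Sm F m) L0] (c : ℕ) 
    (hc : Im F m ^ c ≤ Module.annihilator (Sm F m) N) (aug : L0 →ₗ[Sm F m] N) (hs : Function.Surjective aug)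
    (d : L1 →ₗ[Sm F m] L0) (hd : LinearMap.range d = LinearMap.ker aug) : Nontrivial L1 := by
  by_contra hcon
  rw [not_nontrivial_iff_subsingleton] at hcon
  have hi : ∀ z, aug z = 0 → z = 0 := by
    intro z hz
    have : z ∈ LinearMap.range d := hd ▸ hz
    obtain ⟨y, rfl⟩ := this
    rw [Subsingleton.elim y 0, map_zero]
  obtain ⟨x, hx⟩ := exists_ne (0 : N)
  obtain ⟨z, rfl⟩ := hs x
  apply hx
  have h0 : (X 0 : Sm F m) ^ c • z = 0 := by
    apply hi
    rw [map_smul]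
    exact Module.mem_annihilator.1 (hc (Ideal.pow_mem_pow (Ideal.subset_span (Set.mem_range_self 0)) c)) _
  rw [smul_eq_zero] at h0
  rcases h0 with h0 | h0
  · exact absurd h0 (pow_ne_zero _ (X_ne_zero 0))
  · rw [h0, map_zero]

theorem mainThm (hm : 4 ≤ m) [Nontrivial N] [Module.Free (Sm F m) L0] [Module.Finite (Sm F m) L0] 
    [Module.Free (Sm F m) L1] [Module.Finite (Sm F m) L1] [Module.Free (Sm F m) L2] [Module.Finite (Sm F m) L2]
    (d0 : L1 →ₗ[Sm F m] L0) (d1 : L2 →ₗ[Sm F m] L1) (aug : L0 →ₗ[Sm F m] N) (hs : Function.Surjective aug)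
    (ex0 : LinearMap.range d0 = LinearMap.ker aug) (ex1 : LinearMap.range d1 = LinearMap.ker d0)
    (min1 : LinearMap.range d1 ≤ Im F m • (⊤ : Submodule (Sm F m) L1))
    (min0 : LinearMap.ker aug ≤ Im F m • (⊤ : Submodule (Sm F m) L0))
    (c : ℕ) (hc : Im F m ^ c ≤ Module.annihilator (Sm F m) N)
    (hcyc : ∃ x : N, Submodule.span (Sm F m) {x} = ⊤) (P : Submodule (Sm F m) L2) (hP : P = LinearMap.ker d1) :
    Nonempty (H (Im F m) 4 (P ⊗[Sm F m] P) ≃ₗ[Sm F m] ((L1 ⊗[Sm F m] N) ⧸ LinearMap.range (d1.rTensor N))) ∧ 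
    Nontrivial ((L1 ⊗[Sm F m] N) ⧸ LinearMap.range (d1.rTensor N)) ∧ 
    ¬ Vn (Im F m) 4 (⋀[Sm F m]^2 P) := by
  obtain ⟨ε⟩ := rank_one aug hs min0 hcyc
  have := L1_nontriv c hc aug hs d0 ex0
  have hnt := coker_nontriv c hc d1 min1
  have hex0 : ∀ z, aug z = 0 ↔ ∃ x, d0 x = z := by
    intro z
    rw [← LinearMap.mem_ker, ← ex0]; rfl
  let D : Dat (Im F m) L1 L2 N := 
    { f := ε.toLinearMap ∘ₗ d0
      d := d1
      p := aug ∘ₗ ε.symm.toLinearMap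
      ex1 := by
        intro x
        rw [LinearMap.comp_apply, LinearEquiv.coe_coe, LinearEquiv.map_eq_zero_iff, ← LinearMap.mem_ker, ← ex1]
        rfl
      ex0 := by
        intro r
        rw [LinearMap.comp_apply, hex0]
        simp only [LinearMap.comp_apply, LinearEquiv.coe_coe, LinearEquiv.eq_symm_apply]
      psurj := hs.comp ε.symm.surjective
      c := c
      hc := by
        intro g hg
        have : aug (ε.symm g) = 0 := by
          rw [← mul_one g, ← smul_eq_mul, map_smul, map_smul]
          exact Module.mem_annihilator.1 (hc hg) _
        obtain ⟨x, hx⟩ := (hex0 _).1 this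
        exact ⟨x, by simp [hx]⟩
      vn := fun j hj => Vn_poly F m j (by lia) }
  have hP' : P = D.P := hP
  subst hP'
  refine ⟨⟨D.main1⟩, hnt, fun h => ?_⟩
  have h2 := D.main2 (Vn.equiv h altE.symm)
  obtain ⟨x, hx⟩ := exists_ne (0 : (L1 ⊗[Sm F m] N) ⧸ LinearMap.range (d1.rTensor N))
  apply hx
  obtain ⟨y, hy⟩ := D.main1.surjective x
  rw [← hy, h2 y, map_zero]

end
end LC
end


/-- For a nonzero cyclic graded `S`-module `N` of finite length on
`ℙⁿ` (`n ≥ 4`) with second syzygy bundle `P₂ = P₂(N)`, one has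
`H³_*(P₂ ⊗ P₂) ≅ coker(L₂ ⊗ N → L₁ ⊗ N) ≠ 0`, and consequently `H³_*(Λ²P₂) ≠ 0`. -/
theorem wedge2_second_syzygy_nonvanishing_cyclic
    (K : Type) [Field K] (n : ℕ) (hn : 4 ≤ n)
    (N : Type) [AddCommGroup N] [Module (PolyS K n) N]
    (hN : Nontrivial N)
    (hNfl : IsGradedFiniteLength K n N)
    (hcyc : ∃ x : N, Submodule.span (PolyS K n) {x} = ⊤)
    (res : MinimalResolution K n N) :
    Nonempty (Hstar K n 3 (TensorProduct (PolyS K n)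
        ↥(LinearMap.range (res.d 2)) ↥(LinearMap.range (res.d 2))) ≅
      ModuleCat.of (PolyS K n) ((TensorProduct (PolyS K n) (res.L 1) N) ⧸
        LinearMap.range (LinearMap.rTensor N (res.d 1)))) ∧
    Nontrivial ((TensorProduct (PolyS K n) (res.L 1) N) ⧸
      LinearMap.range (LinearMap.rTensor N (res.d 1))) ∧
    ¬ Subsingleton (Hstar K n 3 (⋀[PolyS K n]^2 ↥(LinearMap.range (res.d 2)))) := by
  obtain ⟨-, c, hc⟩ := hNfl
  have := res.free
  have := res.finite
  obtain ⟨⟨e⟩, hnt, hv⟩ := LC.mainThm (F := K) (m := n) hn (res.d 0) (res.d 1) res.aug res.aug_surjective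
    res.exact0 (res.exact 0) (res.minimal 1) res.minimal0 c hc hcyc (LinearMap.range (res.d 2)) (res.exact 1)
  refine ⟨⟨?_⟩, hnt, fun h => hv fun z => ?_⟩
  · exact LinearEquiv.toModuleIso ((LC.cmpEquiv (irrel K n) (ModuleCat.of (PolyS K n) (TensorProduct (PolyS K n)
        ↥(LinearMap.range (res.d 2)) ↥(LinearMap.range (res.d 2)))) 3).symm.trans e)
  · have hs : Subsingleton ((localCohomology (irrel K n) (3+1)).obj (ModuleCat.of (PolyS K n)
      (⋀[PolyS K n]^2 ↥(LinearMap.range (res.d 2))))) := h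
    apply (LC.cmpEquiv (irrel K n) (ModuleCat.of (PolyS K n)
      (⋀[PolyS K n]^2 ↥(LinearMap.range (res.d 2)))) 3).injective
    exact Subsingleton.elim _ _
end
end
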